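/- Let H > 0, let Ω ⊆ ℝ² be an open connected set, and let u be a solution of (CMC) on Ω. Let z₀ ∈ ℝ² and let C be a nonempty relatively open arc of the circle S = {Q : |Q − z₀| = 1/(2H)} with C ⊆ ∂Ω, and suppose there is an open set V ⊇ C with Ω ∩ V contained in the open disk {Q : |Q − z₀| < 1/(2H)} (so C is a boundary arc of exterior curvature 2H). For 0 < ε < 1/(2H) and Q ∈ C set Q_ε = z₀ + (1 − 2Hε)(Q − z₀), and assume there is ε₀ > 0 such that Q_ε ∈ Ω for all Q ∈ C and 0 < ε < ε₀. Suppose that ω_u = ds along C, in the sense that for every compact subarc T ⊆ C one has lim_{ε→0⁺} ∫_{T_ε} ω_u = ℓ(T), where T_ε = {Q_ε : Q ∈ T} is oriented counterclockwise around z₀ and ℓ(T) denotes the length of T. Then u tends to +∞ at every point of C: for every P ∈ C and every M ∈ ℝ there exists δ > 0 such that u(Q) > M for all Q ∈ Ω with |Q − P| < δ. -/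

import Mathlib

/-!
Put `R = 1 / (2H)` and use polar coordinates `(θ, ρ)` around `z₀` with the radius `ρ` in units of
`R`, so that `C` lies on `ρ = 1`. In these coordinates the equation for `U = u / R` says that the
field `(q / W, ρ p / W)` has divergence `ρ`, where `p = U_ρ`, `q = U_θ / ρ`, `W = √(1 + p² + q²)`.
The radial component never exceeds `ρ`, and the hypothesis `ω_u = ds` says that the total deficit
`∫ (ρ - ρ p / W) dθ` over a subarc tends to `0` as `ρ → 1` (`tendsto_flux_deficit`).

Let the point of `C` under consideration have angle `a`. The barrier is
`v = log φ - log (1 - ρ) / l` with `φ = c² - (θ - a)² + k (ρ - y₀)²` and `y₀ = 1 - 1 / k`. For `k`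
and `l` large in terms of `c` it is a strict subsolution where `φ > 0` and `y₀ ≤ ρ < 1`
(`barrier_ineq`, `barrier_div`). It tends to `-∞` at the zero set of `φ`, and to `+∞` at `ρ = 1`
near the angle `a`.

Choose `K` with `v - K ≤ U` on the side `ρ = y₀`. Then `v - K ≤ U` in the whole rectangle
`|θ - a| ≤ 2c`, `y₀ ≤ ρ < 1` (`excess_nonpos`), by the usual comparison argument: multiply the
difference of the two fluxes by a smooth monotone cut-off of `exp (v - K - U) - 1` that vanishes
where `v - K ≤ U`. Since the flux is a monotone function of the gradient (`flux_monotone`), the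
resulting field has divergence `≥ 0`, and `> 0` where `v - K > U` (`div_cutFlux_ge`). It vanishes
on the lateral and bottom sides, and its flux through the line of height `ρ` is at most the deficit
above, because the flux of `v` cannot exceed `ρ` either. Letting `ρ → 1` in the divergence theorem
shows that the divergence is nowhere positive (`not_div_pos_of_flux_tendsto`).

Hence `u ≥ R (v - K)`, and `v` tends to `+∞` at the point with `θ = a`, `ρ = 1`.
-/

open Real MeasureTheory Filter Set

noncomputable section

/-- Euclidean norm on `ℝ × ℝ`. -/
def enorm2 (p : ℝ × ℝ) : ℝ := Real.sqrt (p.1 ^ 2 + p.2 ^ 2)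

/-- Partial derivative in the `x` direction. -/
def pdx (u : ℝ × ℝ → ℝ) (p : ℝ × ℝ) : ℝ := fderiv ℝ u p (1, 0)

/-- Partial derivative in the `y` direction. -/
def pdy (u : ℝ × ℝ → ℝ) (p : ℝ × ℝ) : ℝ := fderiv ℝ u p (0, 1)

/-- The area element `W_u = √(1 + |∇u|²)`. -/
def Wgraph (u : ℝ × ℝ → ℝ) (p : ℝ × ℝ) : ℝ :=
  Real.sqrt (1 + (pdx u p) ^ 2 + (pdy u p) ^ 2)

/-- Upward unit normal of the graph of `u`. -/
def normalVec (u : ℝ × ℝ → ℝ) (p : ℝ × ℝ) : ℝ × ℝ × ℝ :=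
  (-pdx u p / Wgraph u p, -pdy u p / Wgraph u p, 1 / Wgraph u p)

/-- `u` is a (C²) solution of the constant mean curvature `H` equation on `Ω`. -/
def IsCMCSolution (H : ℝ) (Ω : Set (ℝ × ℝ)) (u : ℝ × ℝ → ℝ) : Prop :=
  ContDiffOn ℝ 2 u Ω ∧ ∀ p ∈ Ω,
    (1 + (pdy u p) ^ 2) * pdx (fun q => pdx u q) p
      - 2 * (pdx u p) * (pdy u p) * pdy (fun q => pdx u q) p
      + (1 + (pdx u p) ^ 2) * pdy (fun q => pdy u q) p
    = 2 * H * (1 + (pdx u p) ^ 2 + (pdy u p) ^ 2) ^ ((3 : ℝ) / 2)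

/-- `C` is a divergence line of the sequence `u` on `Ω`. -/
def IsDivergenceLine (H : ℝ) (Ω : Set (ℝ × ℝ)) (u : ℕ → ℝ × ℝ → ℝ)
    (C : Set (ℝ × ℝ)) : Prop :=
  ∃ z₁ : ℝ × ℝ, C ⊆ Ω ∧ (∀ q ∈ C, enorm2 (q - z₁) = 1 / (2 * H)) ∧
    IsConnected C ∧ C.Nontrivial ∧
    ∃ φ : ℕ → ℕ, StrictMono φ ∧ ∀ Q ∈ C,
      Tendsto (fun n => normalVec (u (φ n)) Q) atTop
        (nhds (2 * H * (z₁.1 - Q.1), 2 * H * (z₁.2 - Q.2), 0))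

/-! ### Pointwise inequalities -/

/-- The map `(p, q) ↦ (p, q) / √(1 + p² + q²)` from gradients to fluxes is monotone, being the
gradient of a convex function. -/
lemma flux_monotone (p q p' q' : ℝ) :
    0 ≤ (p - p') * (p / √(1 + p ^ 2 + q ^ 2) - p' / √(1 + p' ^ 2 + q' ^ 2))
      + (q - q') * (q / √(1 + p ^ 2 + q ^ 2) - q' / √(1 + p' ^ 2 + q' ^ 2)) := by
  have hW : 0 < √(1 + p ^ 2 + q ^ 2) := Real.sqrt_pos.2 (by positivity)
  have hW' : 0 < √(1 + p' ^ 2 + q' ^ 2) := Real.sqrt_pos.2 (by positivity)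
  have e : √(1 + p ^ 2 + q ^ 2) ^ 2 = 1 + p ^ 2 + q ^ 2 := Real.sq_sqrt (by positivity)
  have e' : √(1 + p' ^ 2 + q' ^ 2) ^ 2 = 1 + p' ^ 2 + q' ^ 2 := Real.sq_sqrt (by positivity)
  -- `cs` below is Cauchy–Schwarz for the vectors `(1, gradient)`, whose norms are the area elements
  set W := √(1 + p ^ 2 + q ^ 2)
  set W' := √(1 + p' ^ 2 + q' ^ 2)
  have cs : 1 + p * p' + q * q' ≤ W * W' := by
    refine le_of_sq_le_sq ?_ (by positivity)
    rw [mul_pow, e, e']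
    nlinarith [sq_nonneg (p - p'), sq_nonneg (q - q'), sq_nonneg (p * q' - q * p')]
  have key : (p - p') * (p / W - p' / W') + (q - q') * (q / W - q' / W')
      = (W * W' - (1 + p * p' + q * q')) * (1 / W + 1 / W') := by
    field_simp
    linear_combination (-W') * e - W * e'
  rw [key]
  exact mul_nonneg (by linarith) (by positivity)

lemma sqrt_cube_le {p s : ℝ} (hp : 0 ≤ p) (hs : 0 ≤ s) :
    √(p ^ 2 + s ^ 2) ^ 3 ≤ p ^ 3 + 3 / 2 * (p * s ^ 2) + s ^ 3 := by
  have e : √(p ^ 2 + s ^ 2) ^ 2 = p ^ 2 + s ^ 2 := Real.sq_sqrt (by positivity)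
  refine le_of_sq_le_sq ?_ (by positivity)
  have : (√(p ^ 2 + s ^ 2) ^ 3) ^ 2 = (p ^ 2 + s ^ 2) ^ 3 := by
    rw [← pow_mul, show 3 * 2 = 2 * 3 from rfl, pow_mul, e]
  rw [this]
  have h1 : 0 ≤ p * s := mul_nonneg hp hs
  have h2 : 0 ≤ (p * s ^ 3) * (2 * p ^ 2 + 3 * s ^ 2 - 3 / 4 * (p * s)) := by
    refine mul_nonneg (by positivity) ?_
    nlinarith [sq_nonneg (p - s)]
  nlinarith [sq_nonneg (p - s)]

/-- Upper bound for the cube of the area element `√(1 + p² + (b / r)²)` of a function with radial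
derivative `p` and angular derivative `b` at radius `r`; its leading term `r * p ^ 3` is the one
that cancels in `barrier_ineq`. -/
lemma area_cube_le {r p b : ℝ} (hr0 : 0 < r) (hr1 : r < 1) (hp : 0 ≤ p) :
    r ^ 2 * √(1 + p ^ 2 + (b / r) ^ 2) ^ 3
      ≤ r * p ^ 3 + 3 / 2 * (p * (r ^ 2 + b ^ 2)) + √(r ^ 2 + b ^ 2) ^ 3 / r := by
  have hT2 : √(r ^ 2 + b ^ 2) ^ 2 = r ^ 2 + b ^ 2 := Real.sq_sqrt (by positivity)
  have hT0 : 0 ≤ √(r ^ 2 + b ^ 2) := Real.sqrt_nonneg _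
  generalize √(r ^ 2 + b ^ 2) = T at *
  have e1 : 1 + p ^ 2 + (b / r) ^ 2 = p ^ 2 + (T / r) ^ 2 := by
    rw [div_pow, div_pow, hT2]; field_simp; ring
  rw [e1]
  have h := sqrt_cube_le hp (by positivity : 0 ≤ T / r)
  have h3 : r ^ 2 * p ^ 3 ≤ r * p ^ 3 := by
    have : r ^ 2 ≤ r := by nlinarith
    gcongr
  calc _ ≤ r ^ 2 * (p ^ 3 + 3 / 2 * (p * (T / r) ^ 2) + (T / r) ^ 3) := by gcongr
    _ = r ^ 2 * p ^ 3 + 3 / 2 * (p * T ^ 2) + T ^ 3 / r := by field_simp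
    _ ≤ _ := by rw [hT2]; linarith

set_option maxHeartbeats 1000000 in
/-- The algebraic form of the statement that the barrier is a strict subsolution. The radial
derivative of the barrier is `α + β`, with `α = φ_ρ / φ` and `β = 1 / (l * (1 - ρ))`, its angular
derivative is `-2 * t / φ` with `t = θ - a`, its second radial derivative is
`l * β ^ 2 + 2 * k / φ - α ^ 2`, and `e = k * (ρ - y₀) ^ 2`.
After the cubic terms have cancelled, the remaining error terms are multiples of `S / φ` and
`S * β ^ 2`, where `S = r ^ 2 + b ^ 2`; they are absorbed by the terms with `k` and `l`. The bound
`c ^ 4 / 16 ≤ S * φ ^ 2` holds because `φ` and `t` cannot both be small. -/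
lemma barrier_ineq {r α β φ t e c k l : ℝ} (hr : 1 / 2 ≤ r) (hr1 : r < 1)
    (hc : 0 < c) (hc1 : c ≤ 1 / 2) (hφ : 0 < φ) (hα : 0 ≤ α) (hα1 : α ≤ 2 / φ) (hβ : 0 ≤ β)
    (he : 0 ≤ e) (he1 : e ≤ c ^ 2) (hφe : φ = c ^ 2 - t ^ 2 + e)
    (hl : 2 + 64 / c ^ 4 ≤ l) (hk : 5 + 176 / c ^ 4 ≤ k) :
    r ^ 2 * √(1 + (α + β) ^ 2 + (-2 * t / φ / r) ^ 2) ^ 3 <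
      (r ^ 2 + (-2 * t / φ) ^ 2) * (l * β ^ 2 + 2 * k / φ - α ^ 2)
        + 2 * (α + β) * (-2 * t / φ) ^ 2 * (α + 1 / r)
        + (1 + (α + β) ^ 2) * (-2 / φ - (-2 * t / φ) ^ 2 + r * (α + β)) := by
  have hr0 : 0 < r := by linarith
  have hp : 0 ≤ α + β := by positivity
  have hc2 : c ^ 2 ≤ 1 / 4 := by nlinarith
  have hφ1 : φ ≤ 1 / 2 := by nlinarith [sq_nonneg t]
  have ht1 : t ^ 2 ≤ 1 / 2 := by nlinarith
  have hb2 : (-2 * t / φ) ^ 2 * φ ^ 2 = 4 * t ^ 2 := by field_simp; ring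
  generalize -2 * t / φ = b at *
  set S := r ^ 2 + b ^ 2 with hS
  have hS0 : 0 < S := by positivity
  have hbS : b ^ 2 ≤ S := by nlinarith [sq_nonneg r]
  have hSφ : S * φ ^ 2 = r ^ 2 * φ ^ 2 + 4 * t ^ 2 := by rw [hS, add_mul, hb2]
  have hr2 : r ^ 2 ≤ 1 := by nlinarith
  have hr2' : 1 / 4 ≤ r ^ 2 := by nlinarith
  have hSφ4 : S * φ ^ 2 ≤ 4 := by rw [hSφ]; nlinarith [sq_nonneg φ]
  set σ := c ^ 4 / 16 with hσ
  have hσ0 : 0 < σ := by positivity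
  have hσS : σ ≤ S * φ ^ 2 := by
    rw [hSφ, hσ]
    have hc4 : c ^ 4 ≤ c ^ 2 := by nlinarith [sq_nonneg c]
    rcases le_total φ (c ^ 2 / 2) with h | h
    · nlinarith [mul_nonneg (sq_nonneg r) (sq_nonneg φ)]
    · have : (c ^ 2 / 2) ^ 2 ≤ φ ^ 2 := by gcongr
      nlinarith [mul_nonneg (sub_nonneg.2 hr2') (sq_nonneg φ), sq_nonneg t]
  set y := S / φ with hy
  set z := S * β ^ 2 with hz
  have hy0 : 0 < y := by positivity
  have hz0 : 0 ≤ z := by positivity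
  have hSy : S ≤ y := by
    rw [hy, le_div_iff₀ hφ]
    exact mul_le_of_le_one_right hS0.le (by linarith)
  set T := √S with hT
  have hT0 : 0 < T := Real.sqrt_pos.2 hS0
  have hT2 : T ^ 2 = S := Real.sq_sqrt hS0.le
  have hTφ : T ≤ 2 / φ := by
    rw [le_div_iff₀ hφ]
    refine le_of_sq_le_sq (by rw [mul_pow, hT2]; linarith) (by norm_num)
  have hW : r ^ 2 * √(1 + (α + β) ^ 2 + (b / r) ^ 2) ^ 3
      ≤ r * (α + β) ^ 3 + 3 / 2 * ((α + β) * S) + T ^ 3 / r :=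
    area_cube_le hr0 hr1 hp
  clear_value σ y z T S
  have t1 : T ^ 3 / r ≤ 4 * y := by
    have : T ^ 3 / r = S * T * (1 / r) := by rw [← hT2]; field_simp
    rw [this]
    have h1r : 1 / r ≤ 2 := by rw [div_le_iff₀ hr0]; linarith
    calc S * T * (1 / r) ≤ S * (2 / φ) * 2 := by gcongr
      _ = 4 * y := by rw [hy]; ring
  have hαS : α * S ≤ 2 * y := by
    calc α * S ≤ 2 / φ * S := by gcongr
      _ = 2 * y := by rw [hy]; ring
  have hβS : β * S ≤ (z + y) / 2 := by
    have h := mul_nonneg hS0.le (sq_nonneg (β - 1))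
    have h2 : S * (β - 1) ^ 2 = z + S - 2 * (β * S) := by rw [hz]; ring
    linarith
  have hone : 1 ≤ S * φ ^ 2 / σ := by rw [le_div_iff₀ hσ0]; linarith
  have hα2 : α ^ 2 ≤ 4 / φ ^ 2 := by
    calc α ^ 2 ≤ (2 / φ) ^ 2 := by gcongr
      _ = 4 / φ ^ 2 := by rw [div_pow]; norm_num
  have hα3 : α ^ 2 ≤ 4 / σ * S := by
    calc α ^ 2 ≤ 4 / φ ^ 2 * 1 := by linarith
      _ ≤ 4 / φ ^ 2 * (S * φ ^ 2 / σ) := by gcongr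
      _ = 4 / σ * S := by field_simp
  have t2 : r ^ 2 * α ^ 2 ≤ 4 / σ * y := by
    calc r ^ 2 * α ^ 2 ≤ 1 * (4 / σ * S) := by gcongr
      _ ≤ 4 / σ * y := by rw [one_mul]; gcongr
  have hφinv : 1 / φ ≤ S / σ := by
    calc 1 / φ = 1 / φ * 1 := by ring
      _ ≤ 1 / φ * (S * φ ^ 2 / σ) := by gcongr
      _ = S / σ * φ := by field_simp
      _ ≤ S / σ * 1 := by gcongr; linarith
      _ = S / σ := by ring
  have t3 : 2 / φ ≤ 2 / σ * y := by
    calc 2 / φ = 2 * (1 / φ) := by ring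
      _ ≤ 2 * (S / σ) := by gcongr
      _ = 2 / σ * S := by ring
      _ ≤ _ := by gcongr
  have t4 : 2 * (α + β) ^ 2 / φ ≤ 16 / σ * y + 4 / σ * z := by
    calc 2 * (α + β) ^ 2 / φ ≤ (4 * α ^ 2 + 4 * β ^ 2) / φ := by
          gcongr
          linarith [sq_nonneg (α - β),
            show (α - β) ^ 2 = 2 * α ^ 2 + 2 * β ^ 2 - (α + β) ^ 2 by ring]
      _ = 4 * α ^ 2 / φ + 4 * β ^ 2 * (1 / φ) := by ring
      _ ≤ 4 * (4 / σ * S) / φ + 4 * β ^ 2 * (S / σ) := by gcongr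
      _ = _ := by rw [hy, hz]; ring
  have hl' : 2 + 4 / σ ≤ l := by
    have : 4 / σ = 64 / c ^ 4 := by rw [hσ]; field_simp; norm_num
    linarith
  have hk' : 5 + 11 / σ ≤ k := by
    have : 11 / σ = 176 / c ^ 4 := by rw [hσ]; field_simp; norm_num
    linarith
  have g1 : (2 + 4 / σ) * z ≤ l * z := by gcongr
  have g2 : (5 + 11 / σ) * y ≤ k * y := by gcongr
  have E : S * (l * β ^ 2 + 2 * k / φ - α ^ 2) + 2 * (α + β) * b ^ 2 * (α + 1 / r)
        + (1 + (α + β) ^ 2) * (-2 / φ - b ^ 2 + r * (α + β))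
      = (l - 1) * z + 2 * k * y + r ^ 2 * β ^ 2 - r ^ 2 * α ^ 2 + 2 * (α + β) * b ^ 2 / r
        + r * (α + β) + r * (α + β) ^ 3 - 2 / φ - 2 * (α + β) ^ 2 / φ - b ^ 2 := by
    rw [hz, hy, hS]; ring
  rw [E]
  have n1 : 0 ≤ r ^ 2 * β ^ 2 := by positivity
  have n2 : 0 ≤ 2 * (α + β) * b ^ 2 / r := by positivity
  have n3 : 0 ≤ r * (α + β) := by positivity
  have n4 : (α + β) * S ≤ 2 * y + (z + y) / 2 := by linarith [add_mul α β S]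
  have m1 : (2 + 4 / σ) * z = 2 * z + 4 * (z / σ) := by ring
  have m2 : (5 + 11 / σ) * y = 5 * y + 11 * (y / σ) := by ring
  have m3 : 4 / σ * y = 4 * (y / σ) := by ring
  have m4 : 2 / σ * y = 2 * (y / σ) := by ring
  have m5 : 16 / σ * y + 4 / σ * z = 16 * (y / σ) + 4 * (z / σ) := by ring
  have m6 : (l - 1) * z + 2 * k * y = l * z - z + 2 * (k * y) := by ring
  rw [m1] at g1
  rw [m2] at g2
  rw [m3] at t2
  rw [m4] at t3
  rw [m5] at t4
  rw [m6]
  clear * - hW t1 n4 t2 t3 t4 g1 g2 n1 n2 n3 hbS hSy hy0 hz0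
  linarith

lemma hasDerivAt_flux {p q : ℝ → ℝ} {p' q' x : ℝ} (hp : HasDerivAt p p' x)
    (hq : HasDerivAt q q' x) :
    HasDerivAt (fun s => p s / √(1 + p s ^ 2 + q s ^ 2))
      ((p' * (1 + q x ^ 2) - p x * q x * q') / √(1 + p x ^ 2 + q x ^ 2) ^ 3) x := by
  have pos : 0 < 1 + p x ^ 2 + q x ^ 2 := by positivity
  have h1 : HasDerivAt (fun s => 1 + p s ^ 2 + q s ^ 2) (2 * p x * p' + 2 * q x * q') x := by
    have := ((hp.pow 2).const_add 1).add (hq.pow 2)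
    exact this.congr_deriv (by push_cast; ring)
  have h2 := hp.div (h1.sqrt pos.ne') (Real.sqrt_pos.2 pos).ne'
  refine h2.congr_deriv ?_
  have e : √(1 + p x ^ 2 + q x ^ 2) ^ 2 = 1 + p x ^ 2 + q x ^ 2 := Real.sq_sqrt pos.le
  have hW : 0 < √(1 + p x ^ 2 + q x ^ 2) := Real.sqrt_pos.2 pos
  set W := √(1 + p x ^ 2 + q x ^ 2)
  field_simp
  linear_combination p' * e

/-! ### The flux field and the divergence form of the equation -/

lemma fderiv_pair (F : ℝ × ℝ → ℝ) (p : ℝ × ℝ) (a b : ℝ) :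
    fderiv ℝ F p (a, b) = a * pdx F p + b * pdy F p := by
  have : ((a, b) : ℝ × ℝ) = a • (1, 0) + b • (0, 1) := by simp
  rw [this, map_add, map_smul, map_smul]
  rfl

lemma hasDerivAt_fst {F : ℝ × ℝ → ℝ} {q : ℝ × ℝ} (h : DifferentiableAt ℝ F q) :
    HasDerivAt (fun s => F (s, q.2)) (pdx F q) q.1 := by
  have h1 : HasDerivAt (fun s : ℝ => (s, q.2)) ((1, 0) : ℝ × ℝ) q.1 :=
    (hasDerivAt_id q.1).prodMk (hasDerivAt_const q.1 q.2)
  exact HasFDerivAt.comp_hasDerivAt (x := q.1) (l := F) (l' := fderiv ℝ F q) h.hasFDerivAt h1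

lemma hasDerivAt_snd {F : ℝ × ℝ → ℝ} {q : ℝ × ℝ} (h : DifferentiableAt ℝ F q) :
    HasDerivAt (fun s => F (q.1, s)) (pdy F q) q.2 := by
  have h1 : HasDerivAt (fun s : ℝ => (q.1, s)) ((0, 1) : ℝ × ℝ) q.2 :=
    (hasDerivAt_const q.2 q.1).prodMk (hasDerivAt_id q.2)
  exact HasFDerivAt.comp_hasDerivAt (x := q.2) (l := F) (l' := fderiv ℝ F q) h.hasFDerivAt h1

/-- First component of the flux field `∇u / W_u`. -/
def fluxX (u : ℝ × ℝ → ℝ) (p : ℝ × ℝ) : ℝ := pdx u p / Wgraph u p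

/-- Second component of the flux field `∇u / W_u`. -/
def fluxY (u : ℝ × ℝ → ℝ) (p : ℝ × ℝ) : ℝ := pdy u p / Wgraph u p

lemma contDiffAt_pdx {u : ℝ × ℝ → ℝ} {p : ℝ × ℝ} (h : ContDiffAt ℝ 2 u p) :
    ContDiffAt ℝ 1 (pdx u) p :=
  (h.fderiv_right (m := 1) (by norm_num)).clm_apply contDiffAt_const

lemma contDiffAt_pdy {u : ℝ × ℝ → ℝ} {p : ℝ × ℝ} (h : ContDiffAt ℝ 2 u p) :
    ContDiffAt ℝ 1 (pdy u) p :=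
  (h.fderiv_right (m := 1) (by norm_num)).clm_apply contDiffAt_const

lemma contDiffAt_unit_flux {f g : ℝ × ℝ → ℝ} {p : ℝ × ℝ} (hf : ContDiffAt ℝ 1 f p)
    (hg : ContDiffAt ℝ 1 g p) :
    ContDiffAt ℝ 1 (fun x => f x / √(1 + f x ^ 2 + g x ^ 2)) p := by
  refine hf.div (((contDiffAt_const.add (hf.pow 2)).add (hg.pow 2)).sqrt ?_) ?_
  · positivity
  · exact (Real.sqrt_pos.2 (by positivity)).ne'

lemma contDiffAt_unit_flux' {f g : ℝ × ℝ → ℝ} {p : ℝ × ℝ} (hf : ContDiffAt ℝ 1 f p)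
    (hg : ContDiffAt ℝ 1 g p) :
    ContDiffAt ℝ 1 (fun x => g x / √(1 + f x ^ 2 + g x ^ 2)) p := by
  have := contDiffAt_unit_flux hg hf
  refine this.congr_of_eventuallyEq (Eventually.of_forall fun x => ?_)
  simp only [add_right_comm]

lemma contDiffAt_fluxX {u : ℝ × ℝ → ℝ} {p : ℝ × ℝ} (h : ContDiffAt ℝ 2 u p) :
    ContDiffAt ℝ 1 (fluxX u) p := contDiffAt_unit_flux (contDiffAt_pdx h) (contDiffAt_pdy h)

lemma contDiffAt_fluxY {u : ℝ × ℝ → ℝ} {p : ℝ × ℝ} (h : ContDiffAt ℝ 2 u p) :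
    ContDiffAt ℝ 1 (fluxY u) p := contDiffAt_unit_flux' (contDiffAt_pdx h) (contDiffAt_pdy h)

lemma pdx_pdy_comm {u : ℝ × ℝ → ℝ} {p : ℝ × ℝ} (h : ContDiffAt ℝ 2 u p) :
    pdx (pdy u) p = pdy (pdx u) p := by
  have hs : IsSymmSndFDerivAt ℝ u p := h.isSymmSndFDerivAt (by simp)
  have hd : DifferentiableAt ℝ (fderiv ℝ u) p :=
    (h.fderiv_right (m := 1) (by norm_num)).differentiableAt (by norm_num)
  have e1 : pdx (pdy u) p = fderiv ℝ (fderiv ℝ u) p (1, 0) (0, 1) := by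
    change fderiv ℝ (fun q => fderiv ℝ u q (0, 1)) p (1, 0) = _
    rw [fderiv_clm_apply hd (differentiableAt_const _)]
    simp
  have e2 : pdy (pdx u) p = fderiv ℝ (fderiv ℝ u) p (0, 1) (1, 0) := by
    change fderiv ℝ (fun q => fderiv ℝ u q (1, 0)) p (0, 1) = _
    rw [fderiv_clm_apply hd (differentiableAt_const _)]
    simp
  rw [e1, e2]
  exact hs.eq _ _

/-- The divergence form `div (∇u / W_u) = 2H` of the equation. -/
lemma div_flux {H : ℝ} {Ω : Set (ℝ × ℝ)} {u : ℝ × ℝ → ℝ} (hΩ : IsOpen Ω)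
    (hu : IsCMCSolution H Ω u) {p : ℝ × ℝ} (hp : p ∈ Ω) :
    pdx (fluxX u) p + pdy (fluxY u) p = 2 * H := by
  have h2 : ContDiffAt ℝ 2 u p := hu.1.contDiffAt (hΩ.mem_nhds hp)
  have dx := (contDiffAt_pdx h2).differentiableAt (by norm_num)
  have dy := (contDiffAt_pdy h2).differentiableAt (by norm_num)
  have ex := (hasDerivAt_fst ((contDiffAt_fluxX h2).differentiableAt (by norm_num))).unique
    (hasDerivAt_flux (hasDerivAt_fst dx) (hasDerivAt_fst dy))
  have hY : HasDerivAt (fun s => fluxY u (p.1, s))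
      ((pdy (pdy u) p * (1 + pdx u p ^ 2) - pdy u p * pdx u p * pdy (pdx u) p)
        / √(1 + pdy u p ^ 2 + pdx u p ^ 2) ^ 3) p.2 := by
    have := hasDerivAt_flux (hasDerivAt_snd dy) (hasDerivAt_snd dx)
    refine this.congr_of_eventuallyEq (Eventually.of_forall fun s => ?_)
    simp only [fluxY, Wgraph, add_right_comm]
  have ey := (hasDerivAt_snd ((contDiffAt_fluxY h2).differentiableAt (by norm_num))).unique hY
  rw [ex, ey, pdx_pdy_comm h2, add_right_comm 1 (pdy u p ^ 2)]
  have eq := hu.2 p hp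
  have pos : 0 < 1 + pdx u p ^ 2 + pdy u p ^ 2 := by positivity
  have er : (1 + pdx u p ^ 2 + pdy u p ^ 2) ^ ((3 : ℝ) / 2)
      = √(1 + pdx u p ^ 2 + pdy u p ^ 2) ^ 3 := by
    generalize 1 + pdx u p ^ 2 + pdy u p ^ 2 = x at pos
    rw [Real.sqrt_eq_rpow, ← Real.rpow_natCast, ← Real.rpow_mul pos.le]
    norm_num
  rw [er] at eq
  have hW : 0 < √(1 + pdx u p ^ 2 + pdy u p ^ 2) := Real.sqrt_pos.2 pos
  simp only [Prod.mk.eta] at *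
  rw [← add_div, div_eq_iff (by positivity), ← eq]
  ring

/-! ### Polar coordinates -/

/-- Polar coordinates `q = (θ, ρ)` around `z₀`, the radius being measured in units of `R`. -/
def polarPt (z₀ : ℝ × ℝ) (R : ℝ) (q : ℝ × ℝ) : ℝ × ℝ :=
  z₀ + (R * q.2) • ((Real.cos q.1, Real.sin q.1) : ℝ × ℝ)

lemma contDiff_polarPt (z₀ : ℝ × ℝ) (R : ℝ) : ContDiff ℝ 2 (polarPt z₀ R) := by
  unfold polarPt
  fun_prop

lemma hasDerivAt_comp_polar_fst {F : ℝ × ℝ → ℝ} {z₀ : ℝ × ℝ} {R : ℝ} {q : ℝ × ℝ}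
    (h : DifferentiableAt ℝ F (polarPt z₀ R q)) :
    HasDerivAt (fun s => F (polarPt z₀ R (s, q.2)))
      (R * q.2 * (-sin q.1 * pdx F (polarPt z₀ R q) + cos q.1 * pdy F (polarPt z₀ R q))) q.1 := by
  have h1 : HasDerivAt (fun s : ℝ => polarPt z₀ R (s, q.2))
      ((R * q.2) • ((-sin q.1, cos q.1) : ℝ × ℝ)) q.1 :=
    (((hasDerivAt_cos q.1).prodMk (hasDerivAt_sin q.1)).const_smul (R * q.2)).const_add z₀
  have := HasFDerivAt.comp_hasDerivAt (x := q.1) (l := F) (l' := fderiv ℝ F (polarPt z₀ R q))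
    h.hasFDerivAt h1
  refine this.congr_deriv ?_
  rw [map_smul, fderiv_pair, smul_eq_mul]

lemma hasDerivAt_comp_polar_snd {F : ℝ × ℝ → ℝ} {z₀ : ℝ × ℝ} {R : ℝ} {q : ℝ × ℝ}
    (h : DifferentiableAt ℝ F (polarPt z₀ R q)) :
    HasDerivAt (fun s => F (polarPt z₀ R (q.1, s)))
      (R * (cos q.1 * pdx F (polarPt z₀ R q) + sin q.1 * pdy F (polarPt z₀ R q))) q.2 := by
  have h1 : HasDerivAt (fun s : ℝ => polarPt z₀ R (q.1, s))
      ((R * 1) • ((cos q.1, sin q.1) : ℝ × ℝ)) q.2 :=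
    (((hasDerivAt_id q.2).const_mul R).smul_const ((cos q.1, sin q.1) : ℝ × ℝ)).const_add z₀
  have := HasFDerivAt.comp_hasDerivAt (x := q.2) (l := F) (l' := fderiv ℝ F (polarPt z₀ R q))
    h.hasFDerivAt h1
  refine this.congr_deriv ?_
  rw [map_smul, fderiv_pair, smul_eq_mul, mul_one]

/-- `ρ` times the radial component of the flux of `u`, in polar coordinates. -/
def polarFluxR (z₀ : ℝ × ℝ) (R : ℝ) (u : ℝ × ℝ → ℝ) (q : ℝ × ℝ) : ℝ :=
  q.2 * (fluxX u (polarPt z₀ R q) * cos q.1 + fluxY u (polarPt z₀ R q) * sin q.1)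

/-- The angular component of the flux of `u`, in polar coordinates. -/
def polarFluxT (z₀ : ℝ × ℝ) (R : ℝ) (u : ℝ × ℝ → ℝ) (q : ℝ × ℝ) : ℝ :=
  -(fluxX u (polarPt z₀ R q) * sin q.1) + fluxY u (polarPt z₀ R q) * cos q.1

section
variable {z₀ : ℝ × ℝ} {R : ℝ} {u : ℝ × ℝ → ℝ} {q : ℝ × ℝ}

lemma contDiffAt_polarFluxR (h : ContDiffAt ℝ 2 u (polarPt z₀ R q)) :
    ContDiffAt ℝ 1 (polarFluxR z₀ R u) q := by
  have hp : ContDiffAt ℝ 1 (polarPt z₀ R) q :=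
    ((contDiff_polarPt z₀ R).of_le (by norm_num)).contDiffAt
  have hx : ContDiffAt ℝ 1 (fun q => fluxX u (polarPt z₀ R q)) q := (contDiffAt_fluxX h).comp q hp
  have hy : ContDiffAt ℝ 1 (fun q => fluxY u (polarPt z₀ R q)) q := (contDiffAt_fluxY h).comp q hp
  unfold polarFluxR
  fun_prop

lemma contDiffAt_polarFluxT (h : ContDiffAt ℝ 2 u (polarPt z₀ R q)) :
    ContDiffAt ℝ 1 (polarFluxT z₀ R u) q := by
  have hp : ContDiffAt ℝ 1 (polarPt z₀ R) q :=
    ((contDiff_polarPt z₀ R).of_le (by norm_num)).contDiffAt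
  have hx : ContDiffAt ℝ 1 (fun q => fluxX u (polarPt z₀ R q)) q := (contDiffAt_fluxX h).comp q hp
  have hy : ContDiffAt ℝ 1 (fun q => fluxY u (polarPt z₀ R q)) q := (contDiffAt_fluxY h).comp q hp
  unfold polarFluxT
  fun_prop

/-- The divergence in polar coordinates; the Jacobian is `R * ρ` because lengths are measured in
units of `R`. -/
lemma polar_div (h : ContDiffAt ℝ 2 u (polarPt z₀ R q)) :
    pdy (polarFluxR z₀ R u) q + pdx (polarFluxT z₀ R u) q
      = R * q.2 * (pdx (fluxX u) (polarPt z₀ R q) + pdy (fluxY u) (polarPt z₀ R q)) := by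
  have dX := (contDiffAt_fluxX h).differentiableAt (by norm_num)
  have dY := (contDiffAt_fluxY h).differentiableAt (by norm_num)
  have e1 := (hasDerivAt_snd ((contDiffAt_polarFluxR h).differentiableAt (by norm_num))).unique
    ((hasDerivAt_id q.2).mul (((hasDerivAt_comp_polar_snd dX).mul_const (cos q.1)).add
      ((hasDerivAt_comp_polar_snd dY).mul_const (sin q.1))))
  have e2 := (hasDerivAt_fst ((contDiffAt_polarFluxT h).differentiableAt (by norm_num))).unique
    (((hasDerivAt_comp_polar_fst dX).mul (hasDerivAt_sin q.1)).neg.add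
      ((hasDerivAt_comp_polar_fst dY).mul (hasDerivAt_cos q.1)))
  rw [e1, e2]
  simp only [id, Prod.mk.eta]
  linear_combination (R * q.2 * (pdx (fluxX u) (polarPt z₀ R q) + pdy (fluxY u) (polarPt z₀ R q)))
    * (sin_sq_add_cos_sq q.1)

end

/-! ### A divergence theorem up to an open side -/

/-- A field `(F₁, F₂)` with nonnegative divergence on `[x₀, x₁] × [y₀, 1)` that has no flux through
the lateral and bottom sides, and whose flux through the line at height `y` is bounded by a quantity
tending to `0` as `y → 1`, has no point of positive divergence. -/
lemma not_div_pos_of_flux_tendsto {F₁ F₂ : ℝ × ℝ → ℝ} {x₀ x₁ y₀ : ℝ} {h : ℝ → ℝ}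
    (hC₁ : ∀ q ∈ Icc x₀ x₁ ×ˢ Ico y₀ 1, ContDiffAt ℝ 1 F₁ q)
    (hC₂ : ∀ q ∈ Icc x₀ x₁ ×ˢ Ico y₀ 1, ContDiffAt ℝ 1 F₂ q)
    (hdiv : ∀ q ∈ Icc x₀ x₁ ×ˢ Ico y₀ 1, 0 ≤ pdx F₁ q + pdy F₂ q)
    (hl : ∀ y ∈ Ico y₀ 1, F₁ (x₀, y) = 0) (hr : ∀ y ∈ Ico y₀ 1, F₁ (x₁, y) = 0)
    (hb : ∀ x ∈ Icc x₀ x₁, F₂ (x, y₀) = 0)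
    (hh : Tendsto h (nhdsWithin 1 (Iio 1)) (nhds 0))
    (htop : ∀ y ∈ Ioo y₀ 1, ∫ x in x₀..x₁, F₂ (x, y) ≤ h y)
    {q : ℝ × ℝ} (hq : q ∈ Ioo x₀ x₁ ×ˢ Ioo y₀ 1) : ¬ 0 < pdx F₁ q + pdy F₂ q := by
  intro hpos
  obtain ⟨⟨hq1, hq2⟩, hq3, hq4⟩ := hq
  have hx : x₀ ≤ x₁ := (hq1.trans hq2).le
  have sub : ∀ s < 1, Icc (x₀, y₀) (x₁, s) ⊆ Icc x₀ x₁ ×ˢ Ico y₀ 1 := by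
    intro s hs p hp
    exact ⟨⟨hp.1.1, hp.2.1⟩, hp.1.2, lt_of_le_of_lt hp.2.2 hs⟩
  have cont : ∀ p ∈ Icc x₀ x₁ ×ˢ Ico y₀ 1, ContinuousAt (fun q => pdx F₁ q + pdy F₂ q) p := by
    intro p hp
    have c1 : ContinuousAt (fderiv ℝ F₁) p :=
      ((hC₁ p hp).fderiv_right (m := 0) (by norm_num)).continuousAt
    have c2 : ContinuousAt (fderiv ℝ F₂) p :=
      ((hC₂ p hp).fderiv_right (m := 0) (by norm_num)).continuousAt
    exact (c1.clm_apply continuousAt_const).add (c2.clm_apply continuousAt_const)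
  have int : ∀ s < 1, IntegrableOn (fun q => pdx F₁ q + pdy F₂ q) (Icc (x₀, y₀) (x₁, s)) := by
    intro s hs
    exact ContinuousOn.integrableOn_compact isCompact_Icc
      fun p hp => (cont p (sub s hs hp)).continuousWithinAt
  have key : ∀ s, y₀ ≤ s → s < 1 → ∫ p in Icc (x₀, y₀) (x₁, s), (pdx F₁ p + pdy F₂ p)
      = ∫ x in x₀..x₁, F₂ (x, s) := by
    intro s hs0 hs1
    have hin : ∀ p ∈ Ioo x₀ x₁ ×ˢ Ioo y₀ s, p ∈ Icc x₀ x₁ ×ˢ Ico y₀ 1 := fun p hp =>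
      ⟨⟨hp.1.1.le, hp.1.2.le⟩, hp.2.1.le, hp.2.2.trans hs1⟩
    have := integral_divergence_prod_Icc_of_hasFDerivAt_of_le F₁ F₂ (fderiv ℝ F₁) (fderiv ℝ F₂)
      (x₀, y₀) (x₁, s) ⟨hx, hs0⟩
      (fun p hp => (hC₁ p (sub s hs1 hp)).continuousAt.continuousWithinAt)
      (fun p hp => (hC₂ p (sub s hs1 hp)).continuousAt.continuousWithinAt)
      (fun p hp => ((hC₁ p (hin p hp)).differentiableAt (by norm_num)).hasFDerivAt)
      (fun p hp => ((hC₂ p (hin p hp)).differentiableAt (by norm_num)).hasFDerivAt)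
      (int s hs1)
    have z1 : ∫ x in x₀..x₁, F₂ (x, y₀) = 0 := by
      rw [intervalIntegral.integral_congr (g := fun _ => (0 : ℝ)), intervalIntegral.integral_zero]
      intro x hx'
      rw [uIcc_of_le hx] at hx'
      exact hb x hx'
    have z2 : ∫ y in y₀..s, F₁ (x₁, y) = 0 := by
      rw [intervalIntegral.integral_congr (g := fun _ => (0 : ℝ)), intervalIntegral.integral_zero]
      intro y hy
      rw [uIcc_of_le hs0] at hy
      exact hr y ⟨hy.1, lt_of_le_of_lt hy.2 hs1⟩
    have z3 : ∫ y in y₀..s, F₁ (x₀, y) = 0 := by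
      rw [intervalIntegral.integral_congr (g := fun _ => (0 : ℝ)), intervalIntegral.integral_zero]
      intro y hy
      rw [uIcc_of_le hs0] at hy
      exact hl y ⟨hy.1, lt_of_le_of_lt hy.2 hs1⟩
    simp only [z1, z2, z3, sub_zero, add_zero] at this
    exact this
  obtain ⟨s₀, hs₀, hs₀1⟩ := exists_between hq4
  have ipos : 0 < ∫ p in Icc (x₀, y₀) (x₁, s₀), (pdx F₁ p + pdy F₂ p) := by
    rw [setIntegral_pos_iff_support_of_nonneg_ae _ (int s₀ hs₀1)]
    · -- the divergence is positive on a neighbourhood of `q`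
      have hnear : {p : ℝ × ℝ | 0 < pdx F₁ p + pdy F₂ p} ∩ (Ioo x₀ x₁ ×ˢ Ioo y₀ s₀) ∈ nhds q := by
        refine inter_mem ?_ ((isOpen_Ioo.prod isOpen_Ioo).mem_nhds ⟨⟨hq1, hq2⟩, hq3, hs₀⟩)
        exact (cont q ⟨⟨hq1.le, hq2.le⟩, hq3.le, hq4⟩).eventually (lt_mem_nhds hpos)
      refine lt_of_lt_of_le (Measure.measure_pos_of_mem_nhds volume hnear) (measure_mono ?_)
      rintro p ⟨hp, hp1, hp2⟩
      exact ⟨ne_of_gt hp, ⟨hp1.1.le, hp2.1.le⟩, hp1.2.le, hp2.2.le⟩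
    · refine (ae_restrict_iff' measurableSet_Icc).2 (Eventually.of_forall fun p hp => ?_)
      exact hdiv p (sub s₀ hs₀1 hp)
  have hle : ∀ s ∈ Ioo s₀ 1, ∫ p in Icc (x₀, y₀) (x₁, s₀), (pdx F₁ p + pdy F₂ p) ≤ h s := by
    intro s hs
    have hy : y₀ < s := (hq3.trans hs₀).trans hs.1
    refine le_trans ?_ ((key s hy.le hs.2).le.trans (htop s ⟨hy, hs.2⟩))
    refine setIntegral_mono_set (int s hs.2) ?_ ?_
    · refine (ae_restrict_iff' measurableSet_Icc).2 (Eventually.of_forall fun p hp => ?_)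
      exact hdiv p (sub s hs.2 hp)
    · exact LE.le.eventuallyLE (Icc_subset_Icc le_rfl ⟨le_rfl, hs.1.le⟩)
  have : ∫ p in Icc (x₀, y₀) (x₁, s₀), (pdx F₁ p + pdy F₂ p) ≤ 0 := by
    refine ge_of_tendsto hh ?_
    filter_upwards [Ioo_mem_nhdsLT hs₀1] with s hs using hle s hs
  linarith

/-! ### The barrier -/

/-- The function `φ` cutting the barrier `v = log φ - log (1 - ρ) / l` off near the angles `a ± c`;
here `q = (θ, ρ)`. -/
def bPhi (a c k y₀ : ℝ) (q : ℝ × ℝ) : ℝ := c ^ 2 - (q.1 - a) ^ 2 + k * (q.2 - y₀) ^ 2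

/-- The radial derivative of the barrier `v = log φ - log (1 - ρ) / l`. -/
def bP (a c k l y₀ : ℝ) (q : ℝ × ℝ) : ℝ :=
  2 * k * (q.2 - y₀) / bPhi a c k y₀ q + 1 / (l * (1 - q.2))

/-- The derivative of the barrier in the unit angular direction, that is `v_θ / ρ`. -/
def bQ (a c k y₀ : ℝ) (q : ℝ × ℝ) : ℝ := -2 * (q.1 - a) / bPhi a c k y₀ q / q.2

/-- `ρ` times the radial component of the flux of the barrier. -/
def bFluxR (a c k l y₀ : ℝ) (q : ℝ × ℝ) : ℝ :=
  q.2 * (bP a c k l y₀ q / √(1 + bP a c k l y₀ q ^ 2 + bQ a c k y₀ q ^ 2))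

/-- The angular component of the flux of the barrier. -/
def bFluxT (a c k l y₀ : ℝ) (q : ℝ × ℝ) : ℝ :=
  bQ a c k y₀ q / √(1 + bP a c k l y₀ q ^ 2 + bQ a c k y₀ q ^ 2)

section
variable {a c k l y₀ : ℝ} {q : ℝ × ℝ}

lemma contDiff_bPhi : ContDiff ℝ 1 (bPhi a c k y₀) := by
  unfold bPhi; fun_prop

lemma hasDerivAt_bPhi_fst :
    HasDerivAt (fun s => bPhi a c k y₀ (s, q.2)) (-2 * (q.1 - a)) q.1 := by
  have := (((((hasDerivAt_id q.1).sub_const a).pow 2).const_sub (c ^ 2))).add_const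
    (k * (q.2 - y₀) ^ 2)
  exact this.congr_deriv (by simp)

lemma hasDerivAt_bPhi_snd :
    HasDerivAt (fun s => bPhi a c k y₀ (q.1, s)) (2 * k * (q.2 - y₀)) q.2 := by
  have := ((((hasDerivAt_id q.2).sub_const y₀).pow 2).const_mul k).const_add
    (c ^ 2 - (q.1 - a) ^ 2)
  exact this.congr_deriv (by simp; ring)

lemma contDiffAt_bP (hφ : 0 < bPhi a c k y₀ q) (hl : 0 < l) (h1 : q.2 < 1) :
    ContDiffAt ℝ 1 (bP a c k l y₀) q := by
  unfold bP
  refine ContDiffAt.add (ContDiffAt.div (by fun_prop) contDiff_bPhi.contDiffAt hφ.ne')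
    (ContDiffAt.div (by fun_prop) (by fun_prop) (mul_pos hl (by linarith)).ne')

lemma contDiffAt_bQ (hφ : 0 < bPhi a c k y₀ q) (h0 : 0 < q.2) :
    ContDiffAt ℝ 1 (bQ a c k y₀) q := by
  unfold bQ
  exact ContDiffAt.div (ContDiffAt.div (by fun_prop) contDiff_bPhi.contDiffAt hφ.ne')
    (by fun_prop) h0.ne'

lemma contDiffAt_bFluxR (hφ : 0 < bPhi a c k y₀ q) (hl : 0 < l) (h0 : 0 < q.2) (h1 : q.2 < 1) :
    ContDiffAt ℝ 1 (bFluxR a c k l y₀) q :=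
  contDiffAt_snd.mul (contDiffAt_unit_flux (contDiffAt_bP hφ hl h1) (contDiffAt_bQ hφ h0))

lemma contDiffAt_bFluxT (hφ : 0 < bPhi a c k y₀ q) (hl : 0 < l) (h0 : 0 < q.2) (h1 : q.2 < 1) :
    ContDiffAt ℝ 1 (bFluxT a c k l y₀) q :=
  contDiffAt_unit_flux' (contDiffAt_bP hφ hl h1) (contDiffAt_bQ hφ h0)

lemma barrier_params {c k y₀ : ℝ} (hc : 0 < c) (hc1 : c ≤ 1 / 2) (hk : 5 + 176 / c ^ 4 ≤ k)
    (hk1 : k * (1 - y₀) = 1) : 0 < k ∧ 1 / 2 ≤ y₀ ∧ y₀ < 1 ∧ 1 - y₀ ≤ c ^ 2 := by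
  have hc4 : 0 < 176 / c ^ 4 := by positivity
  have hk0 : 0 < k := by linarith
  have h : 176 / c ^ 4 ≤ k := by linarith
  rw [div_le_iff₀ (by positivity)] at h
  have h2 : c ^ 2 ≤ 1 / 4 := by nlinarith
  have h4 : c ^ 4 ≤ c ^ 2 := by nlinarith [sq_nonneg c]
  have hkc : 1 ≤ k * c ^ 2 := by nlinarith
  refine ⟨hk0, by nlinarith, by nlinarith, by nlinarith⟩

/-- The barrier is a strict subsolution: in the coordinates `(θ, ρ)` a solution has divergence
exactly `ρ` (see `polar_div`), the barrier has a larger one. -/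
lemma barrier_div (hc : 0 < c) (hc1 : c ≤ 1 / 2)
    (hl : 2 + 64 / c ^ 4 ≤ l) (hk : 5 + 176 / c ^ 4 ≤ k) (hk1 : k * (1 - y₀) = 1)
    (hφ : 0 < bPhi a c k y₀ q) (hy : y₀ ≤ q.2) (hy1 : q.2 < 1) :
    q.2 < pdy (bFluxR a c k l y₀) q + pdx (bFluxT a c k l y₀) q := by
  have hc4 : 0 < 64 / c ^ 4 := by positivity
  have hl0 : 0 < l := by linarith
  obtain ⟨hk0, hy2, -, hd⟩ := barrier_params hc hc1 hk hk1
  have hy0 : 1 / 2 ≤ q.2 := by linarith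
  have hq0 : 0 < q.2 := by linarith
  have h1 : 0 < 1 - q.2 := by linarith
  have he : k * (q.2 - y₀) ≤ 1 := by nlinarith
  have he1 : k * (q.2 - y₀) ^ 2 ≤ c ^ 2 := by
    nlinarith [mul_nonneg (sub_nonneg.2 he) (sub_nonneg.2 hy)]
  have hφd : bPhi a c k y₀ q = c ^ 2 - (q.1 - a) ^ 2 + k * (q.2 - y₀) ^ 2 := rfl
  have main := barrier_ineq (r := q.2) (α := 2 * k * (q.2 - y₀) / bPhi a c k y₀ q)
    (β := 1 / (l * (1 - q.2))) (φ := bPhi a c k y₀ q) (t := q.1 - a)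
    (e := k * (q.2 - y₀) ^ 2) hy0 hy1 hc hc1 hφ
    (div_nonneg (mul_nonneg (by positivity) (by linarith)) hφ.le)
    (by gcongr; linarith) (by positivity) (by positivity) he1 hφd hl hk
  -- derivatives of the gradient of the barrier along the coordinate lines
  have pR : HasDerivAt (fun s => bP a c k l y₀ (q.1, s))
      (l * (1 / (l * (1 - q.2))) ^ 2 + 2 * k / bPhi a c k y₀ q
        - (2 * k * (q.2 - y₀) / bPhi a c k y₀ q) ^ 2) q.2 := by
    have d1 := (((hasDerivAt_id q.2).sub_const y₀).const_mul (2 * k)).div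
      (hasDerivAt_bPhi_snd (a := a) (c := c) (k := k) (y₀ := y₀) (q := q)) hφ.ne'
    have d2 := (hasDerivAt_const q.2 (1 : ℝ)).div
      (((hasDerivAt_id q.2).const_sub 1).const_mul l) (mul_pos hl0 h1).ne'
    refine (d1.add d2).congr_deriv ?_
    simp only [id, Prod.mk.eta]
    field_simp
    ring
  have qR : HasDerivAt (fun s => bQ a c k y₀ (q.1, s))
      (-(-2 * (q.1 - a) / bPhi a c k y₀ q) * (2 * k * (q.2 - y₀) / bPhi a c k y₀ q) / q.2
        - (-2 * (q.1 - a) / bPhi a c k y₀ q) / q.2 ^ 2) q.2 := by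
    have d1 := ((hasDerivAt_const q.2 (-2 * (q.1 - a))).div
      (hasDerivAt_bPhi_snd (a := a) (c := c) (k := k) (y₀ := y₀) (q := q)) hφ.ne').div
      (hasDerivAt_id q.2) hq0.ne'
    refine d1.congr_deriv ?_
    simp only [id, Prod.mk.eta, Pi.div_apply]
    field_simp
    ring
  have pT : HasDerivAt (fun s => bP a c k l y₀ (s, q.2))
      (-(2 * k * (q.2 - y₀) / bPhi a c k y₀ q) * (-2 * (q.1 - a) / bPhi a c k y₀ q)) q.1 := by
    have d1 := ((hasDerivAt_const q.1 (2 * k * (q.2 - y₀))).div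
      (hasDerivAt_bPhi_fst (a := a) (c := c) (k := k) (y₀ := y₀) (q := q)) hφ.ne').add_const
      (1 / (l * (1 - q.2)))
    refine d1.congr_deriv ?_
    simp only [Prod.mk.eta]
    field_simp
    ring
  have qT : HasDerivAt (fun s => bQ a c k y₀ (s, q.2))
      ((-2 / bPhi a c k y₀ q - (-2 * (q.1 - a) / bPhi a c k y₀ q) ^ 2) / q.2) q.1 := by
    have d1 := ((((hasDerivAt_id q.1).sub_const a).const_mul (-2)).div
      (hasDerivAt_bPhi_fst (a := a) (c := c) (k := k) (y₀ := y₀) (q := q)) hφ.ne').div_const q.2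
    refine d1.congr_deriv ?_
    simp only [id, Prod.mk.eta]
    field_simp
  have eR := (hasDerivAt_snd ((contDiffAt_bFluxR hφ hl0 hq0 hy1).differentiableAt
    (by norm_num))).unique ((hasDerivAt_id q.2).mul (hasDerivAt_flux pR qR))
  have hT : HasDerivAt (fun s => bFluxT a c k l y₀ (s, q.2))
      (((-2 / bPhi a c k y₀ q - (-2 * (q.1 - a) / bPhi a c k y₀ q) ^ 2) / q.2
          * (1 + bP a c k l y₀ q ^ 2) - bQ a c k y₀ q * bP a c k l y₀ q
          * (-(2 * k * (q.2 - y₀) / bPhi a c k y₀ q) * (-2 * (q.1 - a) / bPhi a c k y₀ q)))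
        / √(1 + bQ a c k y₀ q ^ 2 + bP a c k l y₀ q ^ 2) ^ 3) q.1 := by
    have := hasDerivAt_flux qT pT
    refine this.congr_of_eventuallyEq (Eventually.of_forall fun s => ?_)
    simp only [bFluxT, add_right_comm]
  have eT := (hasDerivAt_fst ((contDiffAt_bFluxT hφ hl0 hq0 hy1).differentiableAt
    (by norm_num))).unique hT
  rw [eR, eT]
  simp only [id, Prod.mk.eta]
  rw [add_right_comm 1 (bQ a c k y₀ q ^ 2)]
  have hP : bP a c k l y₀ q = 2 * k * (q.2 - y₀) / bPhi a c k y₀ q + 1 / (l * (1 - q.2)) := rfl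
  have hQ : bQ a c k y₀ q = -2 * (q.1 - a) / bPhi a c k y₀ q / q.2 := rfl
  rw [← hP, ← hQ] at main
  have e2 : bP a c k l y₀ q - 2 * k * (q.2 - y₀) / bPhi a c k y₀ q = 1 / (l * (1 - q.2)) := by
    rw [hP]; ring
  rw [← e2] at main ⊢
  have hb : -2 * (q.1 - a) / bPhi a c k y₀ q = bQ a c k y₀ q * q.2 := by rw [hQ]; field_simp
  rw [hb] at main ⊢
  have pos : 0 < 1 + bP a c k l y₀ q ^ 2 + bQ a c k y₀ q ^ 2 := by positivity
  have hW2 := Real.sq_sqrt pos.le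
  have hW : 0 < √(1 + bP a c k l y₀ q ^ 2 + bQ a c k y₀ q ^ 2) := Real.sqrt_pos.2 pos
  clear eR eT hT pR qR pT qT hP hQ hb e2
  generalize √(1 + bP a c k l y₀ q ^ 2 + bQ a c k y₀ q ^ 2) = W at *
  generalize bP a c k l y₀ q = P at *
  generalize bQ a c k y₀ q = Q at *
  generalize 2 * k * (q.2 - y₀) / bPhi a c k y₀ q = α at *
  generalize bPhi a c k y₀ q = φ at *
  generalize q.2 = r at *
  have hpos : 0 < r * W ^ 3 := by positivity
  refine lt_of_mul_lt_mul_right ?_ hpos.le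
  calc r * (r * W ^ 3) = r ^ 2 * W ^ 3 := by ring
    _ < _ := main
    _ = _ := by
      field_simp
      linear_combination (-(P * r) * φ * W ^ 0) * hW2
end

/-! ### The cut-off flux difference -/

/-- The radial derivative of `u` at the point with polar coordinates `q`. -/
def gP (z₀ : ℝ × ℝ) (R : ℝ) (u : ℝ × ℝ → ℝ) (q : ℝ × ℝ) : ℝ :=
  cos q.1 * pdx u (polarPt z₀ R q) + sin q.1 * pdy u (polarPt z₀ R q)

/-- The derivative of `u` in the unit angular direction at the point with polar coordinates `q`. -/
def gQ (z₀ : ℝ × ℝ) (R : ℝ) (u : ℝ × ℝ → ℝ) (q : ℝ × ℝ) : ℝ :=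
  -sin q.1 * pdx u (polarPt z₀ R q) + cos q.1 * pdy u (polarPt z₀ R q)

/-- The excess `exp (v - K - u / R) - 1` of the shifted barrier `v - K` over `u / R`, written so
that it also makes sense, and is at most `-1`, where `φ ≤ 0`. -/
def excess (a c k l y₀ K : ℝ) (z₀ : ℝ × ℝ) (R : ℝ) (u : ℝ × ℝ → ℝ) (q : ℝ × ℝ) : ℝ :=
  bPhi a c k y₀ q * exp (-(1 / l) * log (1 - q.2) - K - u (polarPt z₀ R q) / R) - 1

/-- Radial component of the flux difference, cut off to the set where the excess is positive. -/
def cutFluxR (a c k l y₀ K : ℝ) (z₀ : ℝ × ℝ) (R : ℝ) (u : ℝ × ℝ → ℝ) (q : ℝ × ℝ) : ℝ :=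
  smoothTransition (excess a c k l y₀ K z₀ R u q) * (bFluxR a c k l y₀ q - polarFluxR z₀ R u q)

/-- Angular component of the flux difference, cut off to the set where the excess is positive. -/
def cutFluxT (a c k l y₀ K : ℝ) (z₀ : ℝ × ℝ) (R : ℝ) (u : ℝ × ℝ → ℝ) (q : ℝ × ℝ) : ℝ :=
  smoothTransition (excess a c k l y₀ K z₀ R u q) * (bFluxT a c k l y₀ q - polarFluxT z₀ R u q)

section
variable {a c k l y₀ K R : ℝ} {z₀ q : ℝ × ℝ} {u : ℝ × ℝ → ℝ}

lemma Wgraph_polarPt :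
    Wgraph u (polarPt z₀ R q) = √(1 + gP z₀ R u q ^ 2 + gQ z₀ R u q ^ 2) := by
  unfold Wgraph gP gQ
  congr 1
  linear_combination (-(pdx u (polarPt z₀ R q) ^ 2 + pdy u (polarPt z₀ R q) ^ 2))
    * sin_sq_add_cos_sq q.1

lemma polarFluxR_eq : polarFluxR z₀ R u q
    = q.2 * (gP z₀ R u q / √(1 + gP z₀ R u q ^ 2 + gQ z₀ R u q ^ 2)) := by
  rw [← Wgraph_polarPt]
  unfold polarFluxR fluxX fluxY gP
  ring

lemma polarFluxT_eq : polarFluxT z₀ R u q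
    = gQ z₀ R u q / √(1 + gP z₀ R u q ^ 2 + gQ z₀ R u q ^ 2) := by
  rw [← Wgraph_polarPt]
  unfold polarFluxT fluxX fluxY gQ
  ring

lemma unit_flux_le_one (p q : ℝ) : p / √(1 + p ^ 2 + q ^ 2) ≤ 1 := by
  rw [div_le_one (Real.sqrt_pos.2 (by positivity))]
  exact Real.le_sqrt_of_sq_le (by nlinarith [sq_nonneg q])

lemma polarFluxR_le (h : 0 ≤ q.2) : polarFluxR z₀ R u q ≤ q.2 := by
  rw [polarFluxR_eq]
  exact mul_le_of_le_one_right h (unit_flux_le_one _ _)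

lemma bFluxR_le (h : 0 ≤ q.2) : bFluxR a c k l y₀ q ≤ q.2 :=
  mul_le_of_le_one_right h (unit_flux_le_one _ _)

lemma cutFluxR_le (h : 0 ≤ q.2) :
    cutFluxR a c k l y₀ K z₀ R u q ≤ q.2 - polarFluxR z₀ R u q := by
  have h1 := bFluxR_le (a := a) (c := c) (k := k) (l := l) (y₀ := y₀) h
  have h2 := polarFluxR_le (z₀ := z₀) (R := R) (u := u) h
  have h3 := smoothTransition.nonneg (excess a c k l y₀ K z₀ R u q)
  have h4 := smoothTransition.le_one (excess a c k l y₀ K z₀ R u q)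
  unfold cutFluxR
  nlinarith

lemma contDiffAt_excess (hu : ContDiffAt ℝ 2 u (polarPt z₀ R q)) (h1 : q.2 < 1) :
    ContDiffAt ℝ 1 (excess a c k l y₀ K z₀ R u) q := by
  have hU : ContDiffAt ℝ 1 (fun q => u (polarPt z₀ R q)) q :=
    (hu.of_le (by norm_num)).comp q ((contDiff_polarPt z₀ R).of_le (by norm_num)).contDiffAt
  have hlog : ContDiffAt ℝ 1 (fun q : ℝ × ℝ => log (1 - q.2)) q :=
    ContDiffAt.log (by fun_prop) (by linarith)
  have hφ : ContDiffAt ℝ 1 (bPhi a c k y₀) q := contDiff_bPhi.contDiffAt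
  unfold excess
  exact (hφ.mul (((contDiffAt_const.mul hlog).sub contDiffAt_const).sub
    (hU.div_const R)).exp).sub contDiffAt_const

lemma pdx_excess (hR : 0 < R) (hu : ContDiffAt ℝ 2 u (polarPt z₀ R q)) (h0 : 0 < q.2)
    (h1 : q.2 < 1) (hφ : 0 < bPhi a c k y₀ q) :
    pdx (excess a c k l y₀ K z₀ R u) q = (excess a c k l y₀ K z₀ R u q + 1) *
      (q.2 * (bQ a c k y₀ q - gQ z₀ R u q)) := by
  have d := (hasDerivAt_bPhi_fst (a := a) (c := c) (k := k) (y₀ := y₀) (q := q)).mul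
    (((hasDerivAt_comp_polar_fst (hu.differentiableAt (by norm_num))).div_const R).const_sub
      (-(1 / l) * log (1 - q.2) - K)).exp
  have e := (hasDerivAt_fst ((contDiffAt_excess (a := a) (c := c) (k := k) (l := l) (y₀ := y₀)
    (K := K) hu h1).differentiableAt (by norm_num))).unique (d.sub_const 1)
  rw [e]
  simp only [Prod.mk.eta, bQ, gQ, excess]
  field_simp
  ring

lemma pdy_excess (hR : 0 < R) (hl : 0 < l) (hu : ContDiffAt ℝ 2 u (polarPt z₀ R q))
    (h1 : q.2 < 1) (hφ : 0 < bPhi a c k y₀ q) :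
    pdy (excess a c k l y₀ K z₀ R u) q = (excess a c k l y₀ K z₀ R u q + 1) *
      (bP a c k l y₀ q - gP z₀ R u q) := by
  have h1' : 1 - q.2 ≠ 0 := by linarith
  have dl := (((hasDerivAt_id q.2).const_sub 1).log h1').const_mul (-(1 / l))
  have d := (hasDerivAt_bPhi_snd (a := a) (c := c) (k := k) (y₀ := y₀) (q := q)).mul
    ((dl.sub_const K).sub
      ((hasDerivAt_comp_polar_snd (hu.differentiableAt (by norm_num))).div_const R)).exp
  have e := (hasDerivAt_snd ((contDiffAt_excess (a := a) (c := c) (k := k) (l := l) (y₀ := y₀)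
    (K := K) hu h1).differentiableAt (by norm_num))).unique (d.sub_const 1)
  rw [e]
  simp only [Prod.mk.eta, bP, gP, excess, id, Pi.sub_apply]
  field_simp
  ring

lemma excess_lt_zero (hφ : bPhi a c k y₀ q ≤ 0) : excess a c k l y₀ K z₀ R u q < 0 := by
  unfold excess
  have := mul_nonpos_of_nonpos_of_nonneg hφ
    (exp_pos (-(1 / l) * log (1 - q.2) - K - u (polarPt z₀ R q) / R)).le
  linarith

/-- Where `φ ≤ 0` the cut-off vanishes in a neighbourhood, so the singularity of the barrier on
`φ = 0` is harmless. -/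
lemma transition_eventually_zero (hu : ContDiffAt ℝ 2 u (polarPt z₀ R q)) (h1 : q.2 < 1)
    (hφ : bPhi a c k y₀ q ≤ 0) :
    ∀ᶠ p in nhds q, smoothTransition (excess a c k l y₀ K z₀ R u p) = 0 := by
  filter_upwards [(contDiffAt_excess (l := l) (K := K) hu h1).continuousAt.eventually
    (gt_mem_nhds (excess_lt_zero hφ))] with p hp
  exact smoothTransition.zero_of_nonpos hp.le

lemma cutFluxR_eventually_zero (hu : ContDiffAt ℝ 2 u (polarPt z₀ R q)) (h1 : q.2 < 1)
    (hφ : bPhi a c k y₀ q ≤ 0) : cutFluxR a c k l y₀ K z₀ R u =ᶠ[nhds q] fun _ => 0 := by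
  filter_upwards [transition_eventually_zero (l := l) (K := K) hu h1 hφ] with p hp
  rw [cutFluxR, hp, zero_mul]

lemma cutFluxT_eventually_zero (hu : ContDiffAt ℝ 2 u (polarPt z₀ R q)) (h1 : q.2 < 1)
    (hφ : bPhi a c k y₀ q ≤ 0) : cutFluxT a c k l y₀ K z₀ R u =ᶠ[nhds q] fun _ => 0 := by
  filter_upwards [transition_eventually_zero (l := l) (K := K) hu h1 hφ] with p hp
  rw [cutFluxT, hp, zero_mul]

lemma contDiffAt_transition_excess (hu : ContDiffAt ℝ 2 u (polarPt z₀ R q)) (h1 : q.2 < 1) :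
    ContDiffAt ℝ 1 (fun p => smoothTransition (excess a c k l y₀ K z₀ R u p)) q :=
  (smoothTransition.contDiff (n := 1)).contDiffAt.comp q (contDiffAt_excess hu h1)

lemma contDiffAt_cutFluxR (hu : ContDiffAt ℝ 2 u (polarPt z₀ R q)) (hl : 0 < l) (h0 : 0 < q.2)
    (h1 : q.2 < 1) : ContDiffAt ℝ 1 (cutFluxR a c k l y₀ K z₀ R u) q := by
  rcases le_or_gt (bPhi a c k y₀ q) 0 with hφ | hφ
  · exact contDiffAt_const.congr_of_eventuallyEq (cutFluxR_eventually_zero hu h1 hφ)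
  · exact (contDiffAt_transition_excess hu h1).mul
      ((contDiffAt_bFluxR hφ hl h0 h1).sub (contDiffAt_polarFluxR hu))

lemma contDiffAt_cutFluxT (hu : ContDiffAt ℝ 2 u (polarPt z₀ R q)) (hl : 0 < l) (h0 : 0 < q.2)
    (h1 : q.2 < 1) : ContDiffAt ℝ 1 (cutFluxT a c k l y₀ K z₀ R u) q := by
  rcases le_or_gt (bPhi a c k y₀ q) 0 with hφ | hφ
  · exact contDiffAt_const.congr_of_eventuallyEq (cutFluxT_eventually_zero hu h1 hφ)
  · exact (contDiffAt_transition_excess hu h1).mul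
      ((contDiffAt_bFluxT hφ hl h0 h1).sub (contDiffAt_polarFluxT hu))

/-- The divergence of the cut-off flux difference is at least the cut-off times the
divergence difference, because the flux is a monotone function of the gradient. -/
lemma div_cutFlux_ge (hR : 0 < R) (hl : 0 < l) (hu : ContDiffAt ℝ 2 u (polarPt z₀ R q))
    (h0 : 0 < q.2) (h1 : q.2 < 1) (hφ : 0 < bPhi a c k y₀ q) :
    smoothTransition (excess a c k l y₀ K z₀ R u q) *
      (pdy (bFluxR a c k l y₀) q + pdx (bFluxT a c k l y₀) q
        - (pdy (polarFluxR z₀ R u) q + pdx (polarFluxT z₀ R u) q))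
      ≤ pdx (cutFluxT a c k l y₀ K z₀ R u) q + pdy (cutFluxR a c k l y₀ K z₀ R u) q := by
  have one : (1 : WithTop ℕ∞) ≠ 0 := by norm_num
  have hm := (contDiffAt_excess (a := a) (c := c) (k := k) (l := l) (y₀ := y₀) (K := K)
    hu h1).differentiableAt one
  have hg : HasDerivAt smoothTransition (deriv smoothTransition (excess a c k l y₀ K z₀ R u q))
      (excess a c k l y₀ K z₀ R u q) :=
    ((smoothTransition.contDiff (n := 1)).differentiable one _).hasDerivAt
  have hg0 : 0 ≤ deriv smoothTransition (excess a c k l y₀ K z₀ R u q) :=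
    smoothTransition.monotone.deriv_nonneg
  have hgx : HasDerivAt (fun s => smoothTransition (excess a c k l y₀ K z₀ R u (s, q.2)))
      (deriv smoothTransition (excess a c k l y₀ K z₀ R u q)
        * pdx (excess a c k l y₀ K z₀ R u) q) q.1 :=
    HasDerivAt.comp (h₂ := smoothTransition) q.1 hg (hasDerivAt_fst hm)
  have hgy : HasDerivAt (fun s => smoothTransition (excess a c k l y₀ K z₀ R u (q.1, s)))
      (deriv smoothTransition (excess a c k l y₀ K z₀ R u q)
        * pdy (excess a c k l y₀ K z₀ R u) q) q.2 :=
    HasDerivAt.comp (h₂ := smoothTransition) q.2 hg (hasDerivAt_snd hm)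
  have ex := (hasDerivAt_fst ((contDiffAt_cutFluxT (a := a) (c := c) (k := k) (y₀ := y₀) (K := K)
    hu hl h0 h1).differentiableAt one)).unique
    (hgx.mul ((hasDerivAt_fst ((contDiffAt_bFluxT hφ hl h0 h1).differentiableAt one)).sub
      (hasDerivAt_fst ((contDiffAt_polarFluxT hu).differentiableAt one))))
  have ey := (hasDerivAt_snd ((contDiffAt_cutFluxR (a := a) (c := c) (k := k) (y₀ := y₀) (K := K)
    hu hl h0 h1).differentiableAt one)).unique
    (hgy.mul ((hasDerivAt_snd ((contDiffAt_bFluxR hφ hl h0 h1).differentiableAt one)).sub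
      (hasDerivAt_snd ((contDiffAt_polarFluxR hu).differentiableAt one))))
  have mono := flux_monotone (bP a c k l y₀ q) (bQ a c k y₀ q) (gP z₀ R u q) (gQ z₀ R u q)
  have hE : 0 ≤ excess a c k l y₀ K z₀ R u q + 1 := by
    unfold excess
    have := mul_pos hφ (exp_pos (-(1 / l) * log (1 - q.2) - K - u (polarPt z₀ R q) / R))
    linarith
  have key := mul_nonneg (mul_nonneg (mul_nonneg hg0 hE) h0.le) mono
  rw [ex, ey, pdx_excess hR hu h0 h1 hφ, pdy_excess hR hl hu h1 hφ]
  simp only [Prod.mk.eta]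
  rw [polarFluxR_eq, polarFluxT_eq]
  simp only [bFluxR, bFluxT] at key ⊢
  linarith

end

/-! ### Comparison with the barrier -/

/-- Comparison with the barrier: `u / R ≥ v - K` wherever `φ > 0` in the polar rectangle. -/
lemma excess_nonpos {H R a c k l y₀ : ℝ} {Ω : Set (ℝ × ℝ)} {u : ℝ × ℝ → ℝ} {z₀ : ℝ × ℝ}
    (hR : 0 < R) (hRH : R * (2 * H) = 1) (hΩ : IsOpen Ω) (hu : IsCMCSolution H Ω u)
    (hc : 0 < c) (hc1 : c ≤ 1 / 2)
    (hl : 2 + 64 / c ^ 4 ≤ l) (hk : 5 + 176 / c ^ 4 ≤ k) (hk1 : k * (1 - y₀) = 1)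
    (hmem : ∀ q ∈ Icc (a - 2 * c) (a + 2 * c) ×ˢ Ico y₀ 1, polarPt z₀ R q ∈ Ω)
    (hflux : Tendsto (fun y => ∫ x in (a - 2 * c)..(a + 2 * c), (y - polarFluxR z₀ R u (x, y)))
      (nhdsWithin 1 (Iio 1)) (nhds 0)) :
    ∃ K, ∀ q ∈ Ioo (a - 2 * c) (a + 2 * c) ×ˢ Ioo y₀ 1, excess a c k l y₀ K z₀ R u q ≤ 0 := by
  obtain ⟨hk0, hy0, hy1, hyc⟩ := barrier_params hc hc1 hk hk1
  have hl0 : 0 < l := lt_of_lt_of_le (by positivity) hl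
  have hcd : ∀ q ∈ Icc (a - 2 * c) (a + 2 * c) ×ˢ Ico y₀ 1, ContDiffAt ℝ 2 u (polarPt z₀ R q) :=
    fun q hq => hu.1.contDiffAt (hΩ.mem_nhds (hmem q hq))
  have hpos : ∀ q ∈ Icc (a - 2 * c) (a + 2 * c) ×ˢ Ico y₀ 1, 0 < q.2 := fun q hq => by
    have := hq.2.1
    linarith
  have hxx : a - 2 * c ≤ a + 2 * c := by linarith
  -- the constant `K` pushes the barrier below `u / R` on the bottom side
  obtain ⟨K, hK⟩ : ∃ K, ∀ x ∈ Icc (a - 2 * c) (a + 2 * c),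
      -(1 / l) * log (1 - y₀) - u (polarPt z₀ R (x, y₀)) / R ≤ K := by
    have hcont : ContinuousOn
        (fun x => -(1 / l) * log (1 - y₀) - u (polarPt z₀ R (x, y₀)) / R)
        (Icc (a - 2 * c) (a + 2 * c)) := by
      intro x hx
      have h1 : ContinuousAt (fun x => polarPt z₀ R (x, y₀)) x :=
        ((contDiff_polarPt z₀ R).continuous.comp (by fun_prop)).continuousAt
      have h2 : ContinuousAt (fun x => u (polarPt z₀ R (x, y₀))) x :=
        ContinuousAt.comp (g := u) (hcd (x, y₀) ⟨hx, le_rfl, hy1⟩).continuousAt h1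
      exact (continuousAt_const.sub (h2.div_const R)).continuousWithinAt
    obtain ⟨K, hK⟩ := isCompact_Icc.bddAbove_image hcont
    exact ⟨K, fun x hx => hK (mem_image_of_mem _ hx)⟩
  refine ⟨K, fun q hq => ?_⟩
  by_contra! hex
  have hin : q ∈ Icc (a - 2 * c) (a + 2 * c) ×ˢ Ico y₀ 1 :=
    ⟨⟨hq.1.1.le, hq.1.2.le⟩, hq.2.1.le, hq.2.2⟩
  -- on the lateral sides `φ ≤ c ^ 2 - 4 * c ^ 2 + c ^ 2`
  have hside : ∀ x, (x - a) ^ 2 = 4 * c ^ 2 → ∀ y ∈ Ico y₀ 1, bPhi a c k y₀ (x, y) ≤ 0 := by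
    intro x hx y hy
    have he : k * (y - y₀) ≤ 1 := by nlinarith [hy.2]
    have : k * (y - y₀) ^ 2 ≤ c ^ 2 := by
      nlinarith [mul_nonneg (sub_nonneg.2 he) (sub_nonneg.2 hy.1), hy.2]
    simp only [bPhi]
    nlinarith [sq_nonneg c]
  -- lower bound of the divergence: strict subsolution against solution
  have hdiv : ∀ p ∈ Icc (a - 2 * c) (a + 2 * c) ×ˢ Ico y₀ 1, 0 < bPhi a c k y₀ p →
      0 < pdy (bFluxR a c k l y₀) p + pdx (bFluxT a c k l y₀) p
        - (pdy (polarFluxR z₀ R u) p + pdx (polarFluxT z₀ R u) p) := by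
    intro p hp hφ
    have h1 := barrier_div hc hc1 hl hk hk1 hφ hp.2.1 hp.2.2
    have h2 : pdy (polarFluxR z₀ R u) p + pdx (polarFluxT z₀ R u) p = p.2 := by
      rw [polar_div (hcd p hp), div_flux hΩ hu (hmem p hp)]
      linear_combination p.2 * hRH
    linarith
  refine not_div_pos_of_flux_tendsto (F₁ := cutFluxT a c k l y₀ K z₀ R u)
    (F₂ := cutFluxR a c k l y₀ K z₀ R u)
    (fun p hp => contDiffAt_cutFluxT (hcd p hp) hl0 (hpos p hp) hp.2.2)
    (fun p hp => contDiffAt_cutFluxR (hcd p hp) hl0 (hpos p hp) hp.2.2)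
    ?_ ?_ ?_ ?_ hflux ?_ hq ?_
  · intro p hp
    rcases le_or_gt (bPhi a c k y₀ p) 0 with hφ | hφ
    · have e1 := (cutFluxT_eventually_zero (l := l) (K := K) (hcd p hp) hp.2.2 hφ).fderiv_eq (𝕜 := ℝ)
      have e2 := (cutFluxR_eventually_zero (l := l) (K := K) (hcd p hp) hp.2.2 hφ).fderiv_eq (𝕜 := ℝ)
      rw [pdx, pdy, e1, e2]
      simp
    · exact (mul_nonneg (smoothTransition.nonneg _) (hdiv p hp hφ).le).trans
        (div_cutFlux_ge hR hl0 (hcd p hp) (hpos p hp) hp.2.2 hφ)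
  · intro y hy
    exact (cutFluxT_eventually_zero (hcd _ ⟨⟨le_rfl, hxx⟩, hy⟩) hy.2
      (hside _ (by ring) y hy)).eq_of_nhds
  · intro y hy
    exact (cutFluxT_eventually_zero (hcd _ ⟨⟨hxx, le_rfl⟩, hy⟩) hy.2
      (hside _ (by ring) y hy)).eq_of_nhds
  · intro x hx
    have h1 : excess a c k l y₀ K z₀ R u (x, y₀) ≤ 0 := by
      have hφ : bPhi a c k y₀ (x, y₀) ≤ 1 := by
        simp only [bPhi]
        nlinarith [sq_nonneg (x - a)]
      have hs : exp (-(1 / l) * log (1 - y₀) - K - u (polarPt z₀ R (x, y₀)) / R) ≤ 1 := by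
        rw [exp_le_one_iff]
        linarith [hK x hx]
      have := mul_le_mul_of_nonneg_right hφ
        (exp_pos (-(1 / l) * log (1 - y₀) - K - u (polarPt z₀ R (x, y₀)) / R)).le
      simp only [excess]
      linarith
    rw [cutFluxR, smoothTransition.zero_of_nonpos h1, zero_mul]
  · intro y hy
    have hcl : Continuous fun x : ℝ => (x, y) := by fun_prop
    refine intervalIntegral.integral_mono_on hxx ?_ ?_ ?_
    · refine ContinuousOn.intervalIntegrable fun x hx => ?_
      rw [uIcc_of_le hxx] at hx
      have hp : (x, y) ∈ Icc (a - 2 * c) (a + 2 * c) ×ˢ Ico y₀ 1 := ⟨hx, hy.1.le, hy.2⟩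
      exact (ContinuousAt.comp (f := fun x : ℝ => (x, y)) (contDiffAt_cutFluxR (hcd _ hp) hl0
        (hpos _ hp) hy.2).continuousAt hcl.continuousAt).continuousWithinAt
    · refine ContinuousOn.intervalIntegrable fun x hx => ?_
      rw [uIcc_of_le hxx] at hx
      have hp : (x, y) ∈ Icc (a - 2 * c) (a + 2 * c) ×ˢ Ico y₀ 1 := ⟨hx, hy.1.le, hy.2⟩
      exact (continuousAt_const.sub (ContinuousAt.comp (f := fun x : ℝ => (x, y))
        (contDiffAt_polarFluxR (hcd _ hp)).continuousAt hcl.continuousAt)).continuousWithinAt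
    · intro x hx
      exact cutFluxR_le (q := (x, y)) (by linarith [hy.1] : (0 : ℝ) ≤ y)
  · have hφ : 0 < bPhi a c k y₀ q := by
      by_contra! h
      exact absurd (excess_lt_zero (l := l) (K := K) (z₀ := z₀) (R := R) (u := u) h)
        (not_lt.2 hex.le)
    exact (mul_pos (smoothTransition.pos_of_pos hex) (hdiv q hin hφ)).trans_le
      (div_cutFlux_ge hR hl0 (hcd q hin) (hpos q hin) hin.2.2 hφ)

/-! ### Polar coordinates of points near the arc -/

lemma exists_enorm2_ball {P : ℝ × ℝ} {S : Set (ℝ × ℝ)} (hS : S ∈ nhds P) :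
    ∃ δ > 0, ∀ Q, enorm2 (Q - P) < δ → Q ∈ S := by
  obtain ⟨δ, hδ, h⟩ := Metric.mem_nhds_iff.1 hS
  refine ⟨δ, hδ, fun Q hQ => h ?_⟩
  rw [Metric.mem_ball, dist_eq_norm, Prod.norm_def, max_lt_iff]
  constructor
  · refine lt_of_le_of_lt (Real.abs_le_sqrt ?_) hQ
    nlinarith [sq_nonneg (Q - P).2]
  · refine lt_of_le_of_lt (Real.abs_le_sqrt ?_) hQ
    nlinarith [sq_nonneg (Q - P).1]

lemma enorm2_polarPt {z₀ : ℝ × ℝ} {R : ℝ} (q : ℝ × ℝ) :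
    enorm2 (polarPt z₀ R q - z₀) = |R * q.2| := by
  have : polarPt z₀ R q - z₀ = (R * q.2 * cos q.1, R * q.2 * sin q.1) := by
    simp [polarPt]
  rw [this, enorm2, ← Real.sqrt_sq_eq_abs]
  congr 1
  linear_combination (R * q.2) ^ 2 * sin_sq_add_cos_sq q.1

lemma exists_polar_angle {z₀ P : ℝ × ℝ} {R : ℝ} (h : enorm2 (P - z₀) = R) :
    ∃ a, P = polarPt z₀ R (a, 1) := by
  set w : ℂ := ⟨P.1 - z₀.1, P.2 - z₀.2⟩ with hw
  have hn : ‖w‖ = R := by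
    rw [Complex.norm_def, Complex.normSq_apply, ← h, enorm2]
    congr 1
    simp only [hw, Prod.fst_sub, Prod.snd_sub]
    ring
  refine ⟨w.arg, ?_⟩
  have h1 := Complex.norm_mul_cos_arg w
  have h2 := Complex.norm_mul_sin_arg w
  rw [hn] at h1 h2
  ext
  · simp only [polarPt, mul_one, Prod.fst_add, Prod.smul_fst, smul_eq_mul, h1]
    simp only [hw]
    ring
  · simp only [polarPt, mul_one, Prod.snd_add, Prod.smul_snd, smul_eq_mul, h2]
    simp only [hw]
    ring

/-- Points close to the point with polar coordinates `(a, 1)` have polar coordinates close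
to `(a, 1)`. -/
lemma eventually_polar {z₀ : ℝ × ℝ} {R a η : ℝ} (hR : 0 < R) (hη : 0 < η) :
    ∀ᶠ Q in nhds (polarPt z₀ R (a, 1)),
      ∃ q, Q = polarPt z₀ R q ∧ |q.1 - a| < η ∧ |q.2 - 1| < η := by
  -- rotate by `-a` and rescale, so that the base point becomes `1`
  set w : ℝ × ℝ → ℂ := fun Q =>
    (((Q.1 - z₀.1 : ℝ) : ℂ) + ((Q.2 - z₀.2 : ℝ) : ℂ) * Complex.I) / (R : ℂ)
      * Complex.exp (-(a * Complex.I)) with hw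
  have hRc : (R : ℂ) ≠ 0 := by exact_mod_cast hR.ne'
  have hwP : w (polarPt z₀ R (a, 1)) = 1 := by
    have : (((polarPt z₀ R (a, 1)).1 - z₀.1 : ℝ) : ℂ)
        + (((polarPt z₀ R (a, 1)).2 - z₀.2 : ℝ) : ℂ) * Complex.I
        = R * Complex.exp (a * Complex.I) := by
      rw [Complex.exp_mul_I]
      simp [polarPt]
      ring
    simp only [hw]
    rw [this, mul_div_cancel_left₀ _ hRc, ← Complex.exp_add]
    simp
  have hwc : Continuous w := by
    simp only [hw]
    fun_prop
  have ht : Tendsto w (nhds (polarPt z₀ R (a, 1))) (nhds 1) := by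
    rw [← hwP]; exact hwc.continuousAt
  have harg : Tendsto (fun Q => (w Q).arg) (nhds (polarPt z₀ R (a, 1))) (nhds 0) := by
    have := (Complex.continuousAt_arg (x := 1) (by simp)).tendsto.comp ht
    simpa [Function.comp_def] using this
  have hnorm : Tendsto (fun Q => ‖w Q‖) (nhds (polarPt z₀ R (a, 1))) (nhds 1) := by
    simpa using ht.norm
  filter_upwards [harg.eventually (Metric.ball_mem_nhds _ hη),
    hnorm.eventually (Metric.ball_mem_nhds _ hη)] with Q h1 h2
  refine ⟨(a + (w Q).arg, ‖w Q‖), ?_, ?_, ?_⟩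
  · have e1 : (R : ℂ) * ‖w Q‖ * Complex.exp ((a + (w Q).arg : ℝ) * Complex.I)
        = ((Q.1 - z₀.1 : ℝ) : ℂ) + ((Q.2 - z₀.2 : ℝ) : ℂ) * Complex.I := by
      have e2 := Complex.norm_mul_exp_arg_mul_I (w Q)
      rw [Complex.ofReal_add, add_mul, Complex.exp_add]
      calc _ = (R : ℂ) * Complex.exp (a * Complex.I)
            * (‖w Q‖ * Complex.exp ((w Q).arg * Complex.I)) := by ring
        _ = (R : ℂ) * Complex.exp (a * Complex.I) * w Q := by rw [e2]
        _ = _ := by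
          simp only [hw, Complex.exp_neg]
          field_simp [Complex.exp_ne_zero]
    rw [Complex.exp_mul_I, ← Complex.ofReal_cos, ← Complex.ofReal_sin, ← Complex.ofReal_mul] at e1
    have er := congrArg Complex.re e1
    have ei := congrArg Complex.im e1
    simp only [Complex.mul_re, Complex.mul_im, Complex.add_re, Complex.add_im, Complex.ofReal_re,
      Complex.ofReal_im, Complex.I_re, Complex.I_im] at er ei
    ext
    · simp only [polarPt, Prod.fst_add, Prod.smul_fst, smul_eq_mul]
      linarith
    · simp only [polarPt, Prod.snd_add, Prod.smul_snd, smul_eq_mul]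
      linarith
  · simpa using h1
  · simpa [Real.dist_eq] using h2

/-! ### Flux through circles close to the arc -/

/-- The hypothesis on the integrals of `ω_u`, as a statement on the radial flux through the
circles of radius `R * y`. -/
lemma tendsto_flux_deficit {H R x₀ x₁ y₀ : ℝ} {Ω : Set (ℝ × ℝ)} {u : ℝ × ℝ → ℝ} {z₀ : ℝ × ℝ}
    (hR : 0 < R) (hRH : 1 / (2 * H) = R) (hΩ : IsOpen Ω) (hu : IsCMCSolution H Ω u)
    (hx : x₀ ≤ x₁) (hy : y₀ < 1) (hmem : ∀ q ∈ Icc x₀ x₁ ×ˢ Ico y₀ 1, polarPt z₀ R q ∈ Ω)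
    (hω : Tendsto (fun ε : ℝ =>
        ∫ θ in x₀..x₁,
          (pdx u (z₀ + (1 / (2 * H) - ε) • ((Real.cos θ, Real.sin θ) : ℝ × ℝ))
              * ((1 / (2 * H) - ε) * Real.cos θ)
            - pdy u (z₀ + (1 / (2 * H) - ε) • ((Real.cos θ, Real.sin θ) : ℝ × ℝ))
              * (-((1 / (2 * H) - ε) * Real.sin θ)))
          / Wgraph u (z₀ + (1 / (2 * H) - ε) • ((Real.cos θ, Real.sin θ) : ℝ × ℝ)))
        (nhdsWithin 0 (Set.Ioi 0)) (nhds ((x₁ - x₀) / (2 * H)))) :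
    Tendsto (fun y => ∫ x in x₀..x₁, (y - polarFluxR z₀ R u (x, y)))
      (nhdsWithin 1 (Iio 1)) (nhds 0) := by
  have hε : Tendsto (fun y : ℝ => R * (1 - y)) (nhdsWithin 1 (Iio 1)) (nhdsWithin 0 (Ioi 0)) := by
    refine tendsto_nhdsWithin_iff.2 ⟨?_, ?_⟩
    · have : Continuous fun y : ℝ => R * (1 - y) := by fun_prop
      have h := this.tendsto 1
      simp only [sub_self, mul_zero] at h
      exact h.mono_left nhdsWithin_le_nhds
    · filter_upwards [self_mem_nhdsWithin] with y (hy : y < 1)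
      exact mul_pos hR (by linarith)
  have h1 := hω.comp hε
  have h2 : Tendsto (fun y : ℝ => y * (x₁ - x₀)) (nhdsWithin 1 (Iio 1)) (nhds (x₁ - x₀)) := by
    have : Continuous fun y : ℝ => y * (x₁ - x₀) := by fun_prop
    have h := this.tendsto 1
    simp only [one_mul] at h
    exact h.mono_left nhdsWithin_le_nhds
  have h3 := h2.sub (h1.const_mul (1 / R))
  have e0 : x₁ - x₀ - 1 / R * ((x₁ - x₀) / (2 * H)) = 0 := by
    have : (x₁ - x₀) / (2 * H) = (x₁ - x₀) * R := by rw [← hRH]; ring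
    rw [this]
    field_simp
    ring
  rw [e0] at h3
  refine h3.congr' ?_
  filter_upwards [Ioo_mem_nhdsLT hy] with y hy'
  have hint : IntervalIntegrable (fun x => polarFluxR z₀ R u (x, y)) volume x₀ x₁ := by
    refine ContinuousOn.intervalIntegrable fun x hx' => ?_
    rw [uIcc_of_le hx] at hx'
    have hp : (x, y) ∈ Icc x₀ x₁ ×ˢ Ico y₀ 1 := ⟨hx', hy'.1.le, hy'.2⟩
    have hcl : Continuous fun x : ℝ => (x, y) := by fun_prop
    exact (ContinuousAt.comp (f := fun x : ℝ => (x, y)) (contDiffAt_polarFluxR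
      (hu.1.contDiffAt (hΩ.mem_nhds (hmem _ hp)))).continuousAt
      hcl.continuousAt).continuousWithinAt
  rw [intervalIntegral.integral_sub intervalIntegrable_const hint,
    intervalIntegral.integral_const, smul_eq_mul, mul_comm (x₁ - x₀) y]
  congr 1
  simp only [Function.comp_def]
  rw [← intervalIntegral.integral_const_mul]
  refine intervalIntegral.integral_congr fun x _ => ?_
  have hr : 1 / (2 * H) - R * (1 - y) = R * y := by rw [hRH]; ring
  simp only [hr, polarFluxR, fluxX, fluxY, polarPt]
  field_simp
  ring

/-! ### Blow-up along the arc -/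

/-- if `ω_u = ds` along a boundary circle arc `C` of exterior curvature `2H`
(in the sense of convergence of the integrals over the shrunk arcs `T_ε`), then the solution
`u` tends to `+∞` at every point of `C`. -/
theorem stmt_0 (H : ℝ) (hH : 0 < H) (Ω : Set (ℝ × ℝ)) (hΩ : IsOpen Ω)
    (hΩconn : IsConnected Ω) (u : ℝ × ℝ → ℝ) (hu : IsCMCSolution H Ω u)
    (z₀ : ℝ × ℝ) (C : Set (ℝ × ℝ)) (hCne : C.Nonempty)
    (hCopen : ∃ U : Set (ℝ × ℝ), IsOpen U ∧
      C = {q : ℝ × ℝ | enorm2 (q - z₀) = 1 / (2 * H)} ∩ U)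
    (hCbd : C ⊆ frontier Ω)
    (hext : ∃ V : Set (ℝ × ℝ), IsOpen V ∧ C ⊆ V ∧
      Ω ∩ V ⊆ {q : ℝ × ℝ | enorm2 (q - z₀) < 1 / (2 * H)})
    (ε₀ : ℝ) (hε₀ : 0 < ε₀)
    (hQε : ∀ Q ∈ C, ∀ ε : ℝ, 0 < ε → ε < ε₀ →
      z₀ + (1 - 2 * H * ε) • (Q - z₀) ∈ Ω)
    (hω : ∀ θ₁ θ₂ : ℝ, θ₁ ≤ θ₂ →
      (∀ θ ∈ Set.Icc θ₁ θ₂,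
        z₀ + (1 / (2 * H)) • ((Real.cos θ, Real.sin θ) : ℝ × ℝ) ∈ C) →
      Tendsto (fun ε : ℝ =>
        ∫ θ in θ₁..θ₂,
          (pdx u (z₀ + (1 / (2 * H) - ε) • ((Real.cos θ, Real.sin θ) : ℝ × ℝ))
              * ((1 / (2 * H) - ε) * Real.cos θ)
            - pdy u (z₀ + (1 / (2 * H) - ε) • ((Real.cos θ, Real.sin θ) : ℝ × ℝ))
              * (-((1 / (2 * H) - ε) * Real.sin θ)))
          / Wgraph u (z₀ + (1 / (2 * H) - ε) • ((Real.cos θ, Real.sin θ) : ℝ × ℝ)))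
        (nhdsWithin 0 (Set.Ioi 0)) (nhds ((θ₂ - θ₁) / (2 * H)))) :
    ∀ P ∈ C, ∀ M : ℝ, ∃ δ > 0, ∀ Q ∈ Ω, enorm2 (Q - P) < δ → u Q > M := by
  intro P hP M
  obtain ⟨U, hU, rfl⟩ := hCopen
  obtain ⟨V, hV, hCV, hVΩ⟩ := hext
  obtain ⟨R, hRH⟩ : ∃ R, 1 / (2 * H) = R := ⟨_, rfl⟩
  have hR : 0 < R := by rw [← hRH]; positivity
  have hRH' : R * (2 * H) = 1 := by rw [← hRH]; field_simp
  obtain ⟨a, rfl⟩ := exists_polar_angle (hP.1.trans hRH)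
  -- a closed angular interval of half-width `2 * c` around `a` parametrizes a subarc of `C`
  obtain ⟨c, hc, hc1, hcU⟩ : ∃ c, 0 < c ∧ c ≤ 1 / 2 ∧
      ∀ θ ∈ Icc (a - 2 * c) (a + 2 * c), polarPt z₀ R (θ, 1) ∈ U := by
    have hcont : Continuous fun θ : ℝ => polarPt z₀ R (θ, 1) :=
      (contDiff_polarPt z₀ R).continuous.comp (by fun_prop)
    obtain ⟨r, hr, hrU⟩ := Metric.mem_nhds_iff.1
      (hcont.continuousAt.preimage_mem_nhds (hU.mem_nhds hP.2))
    refine ⟨min (1 / 2) (r / 3), by positivity, min_le_left _ _, fun θ hθ => hrU ?_⟩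
    have := min_le_right (1 / 2) (r / 3)
    rw [Metric.mem_ball, Real.dist_eq, abs_lt]
    constructor <;> linarith [hθ.1, hθ.2]
  have harc : ∀ θ ∈ Icc (a - 2 * c) (a + 2 * c), polarPt z₀ R (θ, 1) ∈
      {q : ℝ × ℝ | enorm2 (q - z₀) = 1 / (2 * H)} ∩ U := by
    refine fun θ hθ => ⟨?_, hcU θ hθ⟩
    rw [mem_ofPred_eq, enorm2_polarPt, mul_one, abs_of_pos hR, hRH]
  -- the summand `R / ε₀` of `k` makes the polar rectangle lie in `Ω`
  obtain ⟨l, hl⟩ : ∃ l, l = 2 + 64 / c ^ 4 := ⟨_, rfl⟩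
  obtain ⟨k, hk⟩ : ∃ k, k = 5 + 176 / c ^ 4 + R / ε₀ := ⟨_, rfl⟩
  have hl0 : 0 < l := by rw [hl]; positivity
  have hk0 : 0 < k := by rw [hk]; positivity
  have hkε : R / ε₀ < k := by
    have : 0 < 176 / c ^ 4 := by positivity
    linarith
  have hk5 : 5 + 176 / c ^ 4 ≤ k := by
    have : 0 < R / ε₀ := by positivity
    linarith
  obtain ⟨y₀, hy₀⟩ : ∃ y₀, y₀ = 1 - 1 / k := ⟨_, rfl⟩
  have hk1 : k * (1 - y₀) = 1 := by rw [hy₀]; field_simp; ring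
  obtain ⟨-, hy2, hy1, -⟩ := barrier_params hc hc1 hk5 hk1
  have hmem : ∀ q ∈ Icc (a - 2 * c) (a + 2 * c) ×ˢ Ico y₀ 1, polarPt z₀ R q ∈ Ω := by
    rintro ⟨θ, ρ⟩ ⟨hθ, hρ⟩
    have hε : R * (1 - ρ) < ε₀ := by
      rw [div_lt_iff₀ hε₀] at hkε
      have : k * (1 - ρ) ≤ 1 := by nlinarith [hρ.1]
      have : k * (R * (1 - ρ)) < k * ε₀ := by nlinarith
      exact lt_of_mul_lt_mul_left this hk0.le
    have := hQε _ (harc θ hθ) (R * (1 - ρ)) (mul_pos hR (by linarith [hρ.2])) hε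
    have e : 1 - 2 * H * (R * (1 - ρ)) = ρ := by linear_combination (ρ - 1) * hRH'
    rw [e] at this
    convert this using 1
    simp only [polarPt, add_sub_cancel_left, smul_smul, mul_one, mul_comm R ρ]
  have hx : a - 2 * c ≤ a + 2 * c := by linarith
  have hflux := tendsto_flux_deficit hR hRH hΩ hu hx hy1 hmem (hω _ _ hx (fun θ hθ => by
    have := harc θ hθ
    rwa [polarPt, mul_one, ← hRH] at this))
  obtain ⟨K, hK⟩ := excess_nonpos hR hRH' hΩ hu hc hc1 hl.ge hk5 hk1 hmem hflux
  -- `1 - ρ < exp (-L)` is the closeness to the circle at which the barrier exceeds `M / R`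
  obtain ⟨L, hL⟩ : ∃ L, L = l * (M / R + K + log (2 / c ^ 2)) := ⟨_, rfl⟩
  have hη : 0 < min (c / 2) (min (1 - y₀) (exp (-L))) :=
    lt_min (by linarith) (lt_min (by linarith) (exp_pos _))
  obtain ⟨δ, hδ, hball⟩ := exists_enorm2_ball
    (inter_mem (hV.mem_nhds (hCV hP)) (eventually_polar (z₀ := z₀) (a := a) hR hη))
  refine ⟨δ, hδ, fun Q hQ hQδ => ?_⟩
  obtain ⟨hQV, q, rfl, hq1, hq2⟩ := hball Q hQδ
  obtain ⟨hq1, -⟩ := lt_min_iff.1 hq1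
  obtain ⟨-, hq2⟩ := lt_min_iff.1 hq2
  obtain ⟨hq2, hq3⟩ := lt_min_iff.1 hq2
  rw [abs_lt] at hq1 hq2 hq3
  have hρ1 : q.2 < 1 := by
    have h := hVΩ ⟨hQ, hQV⟩
    rw [mem_ofPred_eq, enorm2_polarPt, hRH] at h
    have := lt_of_abs_lt h
    nlinarith
  have hex := hK q ⟨⟨by linarith, by linarith⟩, by linarith, hρ1⟩
  have hφ : c ^ 2 / 2 ≤ bPhi a c k y₀ q := by
    have : (q.1 - a) ^ 2 ≤ (c / 2) ^ 2 := by nlinarith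
    have : 0 ≤ k * (q.2 - y₀) ^ 2 := by positivity
    unfold bPhi
    nlinarith
  unfold excess at hex
  obtain ⟨s, hs⟩ : ∃ s, s = -(1 / l) * log (1 - q.2) - K - u (polarPt z₀ R q) / R := ⟨_, rfl⟩
  rw [← hs] at hex
  have hs1 : s ≤ log (2 / c ^ 2) := by
    rw [le_log_iff_exp_le (by positivity), le_div_iff₀ (by positivity)]
    nlinarith [mul_le_mul_of_nonneg_right hφ (exp_pos s).le]
  have hlog : log (1 - q.2) < -L := by
    rw [log_lt_iff_lt_exp (by linarith)]
    linarith
  have h1 : M / R + K + log (2 / c ^ 2) < -(1 / l) * log (1 - q.2) := by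
    rw [neg_mul, one_div, ← div_eq_inv_mul, ← neg_div, lt_div_iff₀ hl0, mul_comm, ← hL]
    linarith
  have h2 : M / R < u (polarPt z₀ R q) / R := by linarith
  exact (div_lt_div_iff_of_pos_right hR).1 h2
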